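/- Suppose the minimum-time lateral interception of a continuously moving target E: [0,∞) → ℝ² × (ℝ/2πℤ) by the Dubins car is achieved at a finite time T, i.e., E(t) ∉ R(t) for all t ∈ [0, T) and E(T) ∈ R(T). Then E(T) ∈ E(T) := E_CSC(T) ∪ E_CCC(T), the set of endpoints of CSC- and CCC-trajectories at time T. -/

import Mathlib

/-- The Dubins reachable set at time `t`: all configurations in ℝ² × (ℝ/2πℤ) reachable
from `(0, 0, π/2)` under `ẋ = cos φ`, `ẏ = sin φ`, `φ̇ = u`, using a measurable control
with values in `[-1, 1]`. -/
noncomputable def DubinsReach (t : ℝ) : Set (ℝ × ℝ × Real.Angle) :=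
  {P | ∃ u : ℝ → ℝ, Measurable u ∧ (∀ τ, u τ ∈ Set.Icc (-1 : ℝ) 1) ∧
    P = (∫ r in (0 : ℝ)..t, Real.cos (Real.pi / 2 + ∫ q in (0 : ℝ)..r, u q),
         ∫ r in (0 : ℝ)..t, Real.sin (Real.pi / 2 + ∫ q in (0 : ℝ)..r, u q),
         (↑(Real.pi / 2 + ∫ q in (0 : ℝ)..t, u q) : Real.Angle))}

/-- Terminal configuration at time `t` of the Dubins car starting at `(0,0,π/2)` along a
CSC-trajectory with turn directions `s`, `σ` and switch times `τ₁`, `τ₂`;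
the heading is an angle in ℝ/2πℤ. -/
noncomputable def PCSC (s σ t τ₁ τ₂ : ℝ) : ℝ × ℝ × Real.Angle :=
  (s * (Real.cos τ₁ - 1 - (τ₂ - τ₁) * Real.sin τ₁)
     + σ * (Real.cos (s * τ₁ + σ * (t - τ₂)) - Real.cos τ₁),
   Real.sin τ₁ + (τ₂ - τ₁) * Real.cos τ₁
     - σ * (s * Real.sin τ₁ - Real.sin (s * τ₁ + σ * (t - τ₂))),
   (↑(Real.pi / 2 + s * τ₁ + σ * (t - τ₂)) : Real.Angle))

/-- Terminal configuration at time `t` of the Dubins car starting at `(0,0,π/2)` along a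
CCC-trajectory with first turn direction `s` and switch times `τ₁`, `τ₂`;
the heading is an angle in ℝ/2πℤ. -/
noncomputable def PCCC (s t τ₁ τ₂ : ℝ) : ℝ × ℝ × Real.Angle :=
  (s * (2 * Real.cos τ₁ - 1 - 2 * Real.cos (2 * τ₁ - τ₂)
      + Real.cos (2 * τ₁ - 2 * τ₂ + t)),
   2 * Real.sin τ₁ - 2 * Real.sin (2 * τ₁ - τ₂)
      + Real.sin (2 * τ₁ - 2 * τ₂ + t),
   (↑(Real.pi / 2 + s * (2 * τ₁ - 2 * τ₂ + t)) : Real.Angle))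

/-- The set of terminal points of CSC-trajectories at time `t`. -/
def ECSC (t : ℝ) : Set (ℝ × ℝ × Real.Angle) :=
  {P | ∃ s σ τ₁ τ₂ : ℝ, (s = 1 ∨ s = -1) ∧ (σ = 1 ∨ σ = -1) ∧
    τ₁ ∈ Set.Ico 0 (2 * Real.pi) ∧ τ₂ ∈ Set.Icc τ₁ t ∧ P = PCSC s σ t τ₁ τ₂}

/-- The set of terminal points of CCC-trajectories at time `t`. -/
def ECCC (t : ℝ) : Set (ℝ × ℝ × Real.Angle) :=
  {P | ∃ s τ₁ τ₂ : ℝ, (s = 1 ∨ s = -1) ∧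
    τ₁ ∈ Set.Ico 0 (2 * Real.pi) ∧ τ₂ ∈ Set.Icc τ₁ t ∧
    τ₂ - τ₁ ∈ Set.Ico 0 (2 * Real.pi) ∧ P = PCCC s t τ₁ τ₂}


section DubinsAux

open MeasureTheory intervalIntegral Filter Topology

/-- endpoint at time `t` of the heading deviation `θ`. -/
noncomputable def EndPt (θ : ℝ → ℝ) (t : ℝ) : ℝ × ℝ × ℝ :=
  (∫ r in (0 : ℝ)..t, Real.cos (Real.pi / 2 + θ r),
   ∫ r in (0 : ℝ)..t, Real.sin (Real.pi / 2 + θ r), Real.pi / 2 + θ t)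

/-- project heading to the circle. -/
noncomputable def toA (P : ℝ × ℝ × ℝ) : ℝ × ℝ × Real.Angle := (P.1, P.2.1, (P.2.2 : Real.Angle))

lemma reach_of_lip {η : ℝ → ℝ} (h : LipschitzWith 1 η) (h0 : η 0 = 0) (t : ℝ) :
    toA (EndPt η t) ∈ DubinsReach t := by
  have key : ∀ r, ∫ q in (0:ℝ)..r, deriv η q = η r := by
    intro r
    have := (h.lipschitzOnWith (s := Set.uIcc 0 r)).absolutelyContinuousOnInterval.integral_deriv_eq_sub
    rw [this, h0, sub_zero]
  refine ⟨deriv η, measurable_deriv η, fun τ => ?_, ?_⟩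
  · have := norm_deriv_le_of_lipschitz (x₀ := τ) h
    simpa [abs_le] using this
  · simp only [key]; rfl

lemma lip_of_reach {t : ℝ} {P : ℝ × ℝ × Real.Angle} (h : P ∈ DubinsReach t) :
    ∃ η : ℝ → ℝ, LipschitzWith 1 η ∧ η 0 = 0 ∧ P = toA (EndPt η t) := by
  obtain ⟨u, hu, hb, rfl⟩ := h
  have hint : ∀ a b, IntervalIntegrable u volume a b := by
    intro a b
    refine (intervalIntegrable_const (c := (1:ℝ))).mono_fun hu.aestronglyMeasurable ?_
    filter_upwards with x
    have := hb x
    simp only [Set.mem_Icc] at this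
    simpa [abs_le] using this
  refine ⟨fun r => ∫ q in (0:ℝ)..r, u q, ?_, by simp, rfl⟩
  refine LipschitzWith.of_dist_le_mul fun x y => ?_
  rw [Real.dist_eq, integral_interval_sub_left (hint _ _) (hint _ _), Real.dist_eq]
  have := norm_integral_le_of_norm_le_const (a := y) (b := x) (f := u) (C := 1) (by
    intro z _
    have := hb z
    simp only [Set.mem_Icc] at this
    simpa [abs_le] using this)
  simpa using this

lemma sep_zero {V : Type*} [NormedAddCommGroup V] [NormedSpace ℝ V] [FiniteDimensional ℝ V]
    {K : Set V} (hK : Convex ℝ K) (h0 : (0:V) ∈ K) (hi : (0:V) ∉ interior K) :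
    ∃ f : V →L[ℝ] ℝ, f ≠ 0 ∧ ∀ x ∈ K, f x ≤ 0 := by
  by_cases hne : (interior K).Nonempty
  · obtain ⟨f, hf⟩ := geometric_hahn_banach_open_point hK.interior isOpen_interior hi
    simp only [map_zero] at hf
    refine ⟨f, ?_, ?_⟩
    · rintro rfl
      obtain ⟨x, hx⟩ := hne
      simpa using hf x hx
    · intro x hx
      have hc : x ∈ closure (interior K) := by
        rw [hK.closure_interior_eq_closure_of_nonempty_interior hne]; exact subset_closure hx
      exact closure_minimal (fun y hy => (hf y hy).le) (isClosed_le f.continuous continuous_const) hc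
  · rw [hK.interior_nonempty_iff_affineSpan_eq_top] at hne
    have hs : Submodule.span ℝ K ≠ ⊤ := by
      intro h
      apply hne
      rw [AffineSubspace.affineSpan_eq_top_iff_vectorSpan_eq_top_of_nonempty _ _ _ ⟨0, h0⟩,
        vectorSpan_eq_span_vsub_set_right ℝ h0]
      simpa using h
    obtain ⟨f, hf, hf2⟩ := Submodule.exists_le_ker_of_lt_top _ (lt_top_iff_ne_top.2 hs)
    refine ⟨LinearMap.toContinuousLinearMap f, ?_, ?_⟩
    · simpa using hf
    · intro x hx
      have := hf2 (Submodule.subset_span hx)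
      simp only [LinearMap.mem_ker] at this
      simp [this]

lemma cone_cover {V : Type*} [NormedAddCommGroup V] [NormedSpace ℝ V] [FiniteDimensional ℝ V]
    (F : ℝ × ℝ × V → V) (F' : ℝ × ℝ × V →L[ℝ] V) (A : V) (ρ : ℝ) (hρ : 0 < ρ)
    (hF : HasStrictFDerivAt F F' (1, 0, 0)) (hF' : ∀ z, F' z = z.1 • A + ρ • z.2.2)
    (U : Set (ℝ × ℝ × V)) (hU : U ∈ 𝓝 ((1:ℝ), (0:ℝ), (0:V))) :
    ∀ᶠ q : ℝ × V in 𝓝 (1, F (1,0,0)), ∃ s v, 0 < s ∧ ‖v‖ ≤ s ∧ (q.1, s, v) ∈ U ∧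
      F (q.1, s, v) = q.2 := by
  set z0 : ℝ × ℝ × V := (1,0,0) with hz0
  let J : ℝ × ℝ × V → ℝ × ℝ × V := fun z => (z.1, z.2.1, F z)
  let J' : ℝ × ℝ × V →L[ℝ] ℝ × ℝ × V := (ContinuousLinearMap.fst ℝ _ _).prod
    (((ContinuousLinearMap.fst ℝ _ _).comp (ContinuousLinearMap.snd ℝ _ _)).prod F')
  have hJ : HasStrictFDerivAt J J' z0 := by
    refine HasStrictFDerivAt.prodMk hasStrictFDerivAt_fst (HasStrictFDerivAt.prodMk ?_ hF)
    exact (hasStrictFDerivAt_fst).comp z0 hasStrictFDerivAt_snd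
  have hsurj : J'.range = ⊤ := by
    rw [LinearMap.range_eq_top]
    rintro ⟨a, s, w⟩
    refine ⟨(a, s, ρ⁻¹ • (w - a • A)), ?_⟩
    have : F' (a, s, ρ⁻¹ • (w - a • A)) = w := by
      rw [hF']; simp [smul_smul, hρ.ne']
    show ((a, s, F' (a, s, ρ⁻¹ • (w - a • A))) : ℝ × ℝ × V) = _
    rw [this]
  have : CompleteSpace V := FiniteDimensional.complete ℝ V
  have hmap := hJ.map_nhds_eq_of_surj hsurj
  have hlo := hF.hasFDerivAt.isLittleO.def (c := ρ/4) (by positivity)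
  have hU2 : {z | z ∈ U ∧ ‖F z - F z0 - F' (z - z0)‖ ≤ ρ/4 * ‖z - z0‖} ∈ 𝓝 z0 :=
    Filter.inter_mem hU hlo
  have hI := Filter.image_mem_map (m := J) hU2
  rw [hmap] at hI
  obtain ⟨R, hR, hball⟩ := Metric.mem_nhds_iff.1 hI
  have hs0 : 0 < R/2 := by positivity
  set s := R/2
  have c1 : ∀ᶠ q : ℝ × V in 𝓝 (1, F z0), ‖q.2 - F z0‖ + |q.1 - 1| * ‖A‖ + ρ/4 * |q.1-1| < ρ/4 * s := by
    have hc : Continuous fun q : ℝ × V => ‖q.2 - F z0‖ + |q.1 - 1| * ‖A‖ + ρ/4 * |q.1-1| := by fun_prop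
    refine hc.continuousAt.eventually_lt continuousAt_const ?_
    simp; positivity
  have c2 : ∀ᶠ q : ℝ × V in 𝓝 (1, F z0), q ∈ Metric.ball ((1:ℝ), F z0) R := Metric.ball_mem_nhds _ hR
  filter_upwards [c1, c2] with q h1 h2
  have hin : (q.1, s, q.2) ∈ Metric.ball (J z0) R := by
    rw [Metric.mem_ball, Prod.dist_eq, max_lt_iff] at h2
    rw [Metric.mem_ball, Prod.dist_eq, Prod.dist_eq, max_lt_iff, max_lt_iff]
    refine ⟨h2.1, ?_, h2.2⟩
    show dist s 0 < R
    rw [Real.dist_eq, sub_zero, abs_of_pos hs0]; exact half_lt_self hR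
  obtain ⟨⟨a, s', v⟩, ⟨hzU, hz⟩, hzJ⟩ := hball hin
  simp only [J, Prod.mk.injEq] at hzJ
  obtain ⟨rfl, rfl, hq⟩ := hzJ
  refine ⟨s, v, hs0, ?_, hzU, hq⟩
  rw [hq, hF'] at hz
  simp only [hz0, Prod.mk_sub_mk, sub_zero, Prod.norm_mk, Real.norm_eq_abs] at hz
  have e1 : ‖ρ • v‖ ≤ ‖q.2 - F z0 - ((q.1 - 1) • A + ρ • v)‖ + (‖q.2 - F z0‖ + |q.1 - 1| * ‖A‖) := by
    have : ρ • v = (q.2 - F z0 - (q.1-1) • A) - (q.2 - F z0 - ((q.1 - 1) • A + ρ • v)) := by abel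
    calc ‖ρ • v‖ = ‖(q.2 - F z0 - (q.1-1) • A) - (q.2 - F z0 - ((q.1 - 1) • A + ρ • v))‖ := by rw [← this]
      _ ≤ ‖(q.2 - F z0 - (q.1-1) • A)‖ + ‖(q.2 - F z0 - ((q.1 - 1) • A + ρ • v))‖ := norm_sub_le _ _
      _ ≤ (‖q.2 - F z0‖ + ‖(q.1-1) • A‖) + ‖(q.2 - F z0 - ((q.1 - 1) • A + ρ • v))‖ := by
        gcongr; exact norm_sub_le _ _
      _ = _ := by rw [norm_smul, Real.norm_eq_abs]; ring
  rw [norm_smul, Real.norm_eq_abs, abs_of_pos hρ] at e1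
  have e2 : max |q.1 - 1| (max |s| ‖v‖) ≤ |q.1 - 1| + (s + ‖v‖) := by
    rw [abs_of_pos hs0]
    have := norm_nonneg v
    have := abs_nonneg (q.1 - 1)
    exact max_le (by linarith) (max_le (by linarith) (by linarith))
  have e3 : ρ/4 * max |q.1 - 1| (max |s| ‖v‖) ≤ ρ/4 * (|q.1 - 1| + (s + ‖v‖)) := by gcongr
  have e4 : ρ * ‖v‖ ≤ ρ/4 * (|q.1 - 1| + (s + ‖v‖)) + (‖q.2 - F z0‖ + |q.1 - 1| * ‖A‖) := by
    simp only [hz0] at e1 ⊢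
    linarith
  have e5 : ρ * (3 * ‖v‖) ≤ ρ * (2 * s) := by simp only [hz0] at e4 h1 ⊢; nlinarith
  have e6 := le_of_mul_le_mul_left e5 hρ
  linarith


lemma strict_cos {H : Type*} [NormedAddCommGroup H] [NormedSpace ℝ H]
    (l : ℝ → H →L[ℝ] ℝ) (hl : Continuous l) (c T : ℝ) (z0 : H) :
    HasStrictFDerivAt (fun z => ∫ r in (0:ℝ)..T, Real.cos (c + l r z))
      (∫ r in (0:ℝ)..T, (-Real.sin (c + l r z0)) • l r) z0 := by
  have hcont : Continuous fun z => ∫ r in (0:ℝ)..T, (-Real.sin (c + l r z)) • l r := by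
    apply intervalIntegral.continuous_parametric_intervalIntegral_of_continuous'
    fun_prop
  refine hasStrictFDerivAt_of_hasFDerivAt_of_continuousAt
    (f' := fun z => ∫ r in (0:ℝ)..T, (-Real.sin (c + l r z)) • l r) ?_ hcont.continuousAt
  filter_upwards with z
  refine intervalIntegral.hasFDerivAt_integral_of_dominated_of_fderiv_le (𝕜 := ℝ)
    (bound := fun r => ‖l r‖) (s := Set.univ) (F' := fun z r => (-Real.sin (c + l r z)) • l r)
    Filter.univ_mem ?_ ?_ ?_ ?_ ?_ ?_
  · filter_upwards with x
    exact (by fun_prop : Continuous fun r => Real.cos (c + l r x)).aestronglyMeasurable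
  · exact (by fun_prop : Continuous fun r => Real.cos (c + l r z)).intervalIntegrable _ _
  · exact (by fun_prop : Continuous fun r => (-Real.sin (c + l r z)) • l r).aestronglyMeasurable
  · filter_upwards with r _ x _
    rw [norm_smul, norm_neg, Real.norm_eq_abs]
    exact mul_le_of_le_one_left (norm_nonneg _) (Real.abs_sin_le_one _)
  · exact (hl.norm).intervalIntegrable _ _
  · filter_upwards with r _ x _
    exact (((l r).hasFDerivAt).const_add c).cos

lemma strict_sin {H : Type*} [NormedAddCommGroup H] [NormedSpace ℝ H]
    (l : ℝ → H →L[ℝ] ℝ) (hl : Continuous l) (c T : ℝ) (z0 : H) :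
    HasStrictFDerivAt (fun z => ∫ r in (0:ℝ)..T, Real.sin (c + l r z))
      (∫ r in (0:ℝ)..T, (Real.cos (c + l r z0)) • l r) z0 := by
  have := strict_cos l hl (c - Real.pi / 2) T z0
  have e : ∀ x, c - Real.pi / 2 + x = (c + x) - Real.pi / 2 := fun x => by ring
  simpa only [e, Real.cos_sub_pi_div_two, Real.sin_sub_pi_div_two, neg_neg] using this

/-- The linearised endpoint map. -/
noncomputable def DL (θ : C(ℝ, ℝ)) (T : ℝ) : C(ℝ, ℝ) →ₗ[ℝ] ℝ × ℝ × ℝ where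
  toFun h := (∫ r in (0:ℝ)..T, (-Real.sin (Real.pi / 2 + θ r)) * h r,
    ∫ r in (0:ℝ)..T, (Real.cos (Real.pi / 2 + θ r)) * h r, h T)
  map_add' h k := by
    simp only [ContinuousMap.add_apply, mul_add, Prod.mk_add_mk]
    rw [intervalIntegral.integral_add, intervalIntegral.integral_add] <;>
    exact Continuous.intervalIntegrable (by fun_prop) _ _
  map_smul' a h := by
    simp only [ContinuousMap.smul_apply, smul_eq_mul, RingHom.id_apply, Prod.smul_mk,
      ← intervalIntegral.integral_const_mul]
    simp only [mul_left_comm]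

/-- admissible heading deviations. -/
def Adm : Set C(ℝ, ℝ) := {η | LipschitzWith 1 η ∧ η 0 = 0}

lemma abs_of_lip {η : ℝ → ℝ} (h : LipschitzWith 1 η) (x y : ℝ) : |η x - η y| ≤ |x - y| := by
  have := h.dist_le_mul x y
  simpa [Real.dist_eq] using this

lemma lip_of_abs {η : ℝ → ℝ} (h : ∀ x y, |η x - η y| ≤ |x - y|) : LipschitzWith 1 η :=
  LipschitzWith.of_dist_le_mul fun x y => by simpa [Real.dist_eq] using h x y

lemma adm_convex : Convex ℝ Adm := by
  rintro x ⟨hx, hx0⟩ y ⟨hy, hy0⟩ a b ha hb hab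
  refine ⟨lip_of_abs fun p q => ?_, by simp [hx0, hy0]⟩
  have h1 := abs_of_lip hx p q
  have h2 := abs_of_lip hy p q
  simp only [ContinuousMap.add_apply, ContinuousMap.smul_apply, smul_eq_mul]
  calc |a * x p + b * y p - (a * x q + b * y q)| = |a * (x p - x q) + b * (y p - y q)| := by
        congr 1; ring
    _ ≤ |a * (x p - x q)| + |b * (y p - y q)| := abs_add_le _ _
    _ = a * |x p - x q| + b * |y p - y q| := by rw [abs_mul, abs_mul, abs_of_nonneg ha, abs_of_nonneg hb]
    _ ≤ a * |p - q| + b * |p - q| := by gcongr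
    _ = |p - q| := by rw [← add_mul, hab, one_mul]

lemma reach_scaled (η : C(ℝ, ℝ)) (a T : ℝ) (ha : 0 < a) (h : ∀ x y, |η x - η y| ≤ a * |x - y|)
    (h0 : η 0 = 0) :
    toA (a * ∫ r in (0:ℝ)..T, Real.cos (Real.pi / 2 + η r),
      a * ∫ r in (0:ℝ)..T, Real.sin (Real.pi / 2 + η r), Real.pi / 2 + η T) ∈ DubinsReach (a * T) := by
  have := reach_of_lip (η := fun r => η (r / a)) (lip_of_abs fun x y => by
    refine (h _ _).trans ?_
    rw [← sub_div, abs_div, abs_of_pos ha, mul_div_cancel₀ _ ha.ne']) (by simp [h0]) (a * T)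
  convert this using 2
  simp only [EndPt]
  rw [intervalIntegral.integral_comp_div (fun x => Real.cos (Real.pi / 2 + η x)) ha.ne',
    intervalIntegral.integral_comp_div (fun x => Real.sin (Real.pi / 2 + η x)) ha.ne']
  simp [ha.ne']

lemma ext_or_cover (θ : C(ℝ, ℝ)) (hθ : θ ∈ Adm) (T : ℝ) :
    (∃ f : ℝ × ℝ × ℝ →L[ℝ] ℝ, f ≠ 0 ∧ ∀ η ∈ Adm, f (DL θ T (η - θ)) ≤ 0) ∨
    (∀ᶠ q : ℝ × (ℝ × ℝ × ℝ) in 𝓝 (1, EndPt θ T), toA q.2 ∈ DubinsReach (q.1 * T)) := by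
  let K : Set (ℝ × ℝ × ℝ) := DL θ T '' ((fun η => η - θ) '' Adm)
  have hK : Convex ℝ K := by
    apply Convex.linear_image
    have := adm_convex.translate (-θ)
    simpa [neg_add_eq_sub] using this
  have h0 : (0 : ℝ × ℝ × ℝ) ∈ K := ⟨0, ⟨θ, hθ, by simp⟩, by simp⟩
  by_cases hi : (0 : ℝ × ℝ × ℝ) ∈ interior K
  swap
  · left
    obtain ⟨f, hf, hf2⟩ := sep_zero hK h0 hi
    exact ⟨f, hf, fun η hη => hf2 _ ⟨_, ⟨η, hη, rfl⟩, rfl⟩⟩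
  right
  obtain ⟨ε, hε, hball⟩ := Metric.mem_nhds_iff.1 (mem_interior_iff_mem_nhds.1 hi)
  obtain ⟨ρ, hρ, hρε⟩ : ∃ ρ, 0 < ρ ∧ ρ < ε := exists_between hε
  have hmem : ∀ x : ℝ × ℝ × ℝ, ‖x‖ ≤ ρ → ∃ η ∈ Adm, DL θ T (η - θ) = x := by
    intro x hx
    have : x ∈ K := hball (by rw [mem_ball_zero_iff]; linarith)
    obtain ⟨_, ⟨η, hη, rfl⟩, h⟩ := this
    exact ⟨η, hη, h⟩
  have nn : |ρ| ≤ ρ := (abs_of_pos hρ).le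
  obtain ⟨a1, ha1, da1⟩ := hmem (ρ, 0, 0) (by simp [Prod.norm_def, nn])
  obtain ⟨b1, hb1, db1⟩ := hmem (-ρ, 0, 0) (by simp [Prod.norm_def, nn])
  obtain ⟨a2, ha2, da2⟩ := hmem (0, ρ, 0) (by simp [Prod.norm_def, nn])
  obtain ⟨b2, hb2, db2⟩ := hmem (0, -ρ, 0) (by simp [Prod.norm_def, nn])
  obtain ⟨a3, ha3, da3⟩ := hmem (0, 0, ρ) (by simp [Prod.norm_def, nn])
  obtain ⟨b3, hb3, db3⟩ := hmem (0, 0, -ρ) (by simp [Prod.norm_def, nn])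
  -- the linear family
  let path : ℝ × ℝ × (ℝ × ℝ × ℝ) → C(ℝ, ℝ) := fun z =>
    z.1 • θ + z.2.1 • ((a1 - θ) + (b1 - θ) + (a2 - θ) + (b2 - θ) + (a3 - θ) + (b3 - θ))
      + (z.2.2.1 / 2) • ((a1 - θ) - (b1 - θ)) + (z.2.2.2.1 / 2) • ((a2 - θ) - (b2 - θ))
      + (z.2.2.2.2 / 2) • ((a3 - θ) - (b3 - θ))
  let p1 : ℝ × ℝ × (ℝ × ℝ × ℝ) →L[ℝ] ℝ := ContinuousLinearMap.fst ℝ _ _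
  let p2 : ℝ × ℝ × (ℝ × ℝ × ℝ) →L[ℝ] ℝ :=
    (ContinuousLinearMap.fst ℝ _ _).comp (ContinuousLinearMap.snd ℝ _ _)
  let pv : ℝ × ℝ × (ℝ × ℝ × ℝ) →L[ℝ] (ℝ × ℝ × ℝ) :=
    (ContinuousLinearMap.snd ℝ _ _).comp (ContinuousLinearMap.snd ℝ _ _)
  let v1 : ℝ × ℝ × (ℝ × ℝ × ℝ) →L[ℝ] ℝ := (ContinuousLinearMap.fst ℝ _ _).comp pv
  let v2 : ℝ × ℝ × (ℝ × ℝ × ℝ) →L[ℝ] ℝ :=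
    ((ContinuousLinearMap.fst ℝ _ _).comp (ContinuousLinearMap.snd ℝ _ _)).comp pv
  let v3 : ℝ × ℝ × (ℝ × ℝ × ℝ) →L[ℝ] ℝ :=
    ((ContinuousLinearMap.snd ℝ _ _).comp (ContinuousLinearMap.snd ℝ _ _)).comp pv
  let l : ℝ → ℝ × ℝ × (ℝ × ℝ × ℝ) →L[ℝ] ℝ := fun r =>
    θ r • p1 + ((a1 - θ) r + (b1 - θ) r + (a2 - θ) r + (b2 - θ) r + (a3 - θ) r + (b3 - θ) r) • p2
      + (((a1 - θ) r - (b1 - θ) r) / 2) • v1 + (((a2 - θ) r - (b2 - θ) r) / 2) • v2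
      + (((a3 - θ) r - (b3 - θ) r) / 2) • v3
  have hl : Continuous l := by fun_prop
  have hlp : ∀ r z, l r z = path z r := by
    intro r z
    simp [l, path, p1, p2, v1, v2, v3, pv]
    ring
  let F : ℝ × ℝ × (ℝ × ℝ × ℝ) → ℝ × ℝ × ℝ := fun z =>
    (z.1 * ∫ r in (0:ℝ)..T, Real.cos (Real.pi / 2 + l r z),
      z.1 * ∫ r in (0:ℝ)..T, Real.sin (Real.pi / 2 + l r z), Real.pi / 2 + l T z)
  set z0 : ℝ × ℝ × (ℝ × ℝ × ℝ) := (1, 0, 0) with hz0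
  have hpz0 : path z0 = θ := by simp [path, hz0]
  have hF0 : F z0 = EndPt θ T := by
    simp only [F, hlp, hpz0, EndPt]; simp [hz0]
  have s1 := (hasStrictFDerivAt_fst (𝕜 := ℝ) (p := z0)).mul (strict_cos l hl (Real.pi / 2) T z0)
  have s2 := (hasStrictFDerivAt_fst (𝕜 := ℝ) (p := z0)).mul (strict_sin l hl (Real.pi / 2) T z0)
  have s3 := ((l T).hasStrictFDerivAt (x := z0)).const_add (Real.pi / 2)
  obtain ⟨F', hF'd, hF⟩ : ∃ F' : ℝ × ℝ × (ℝ × ℝ × ℝ) →L[ℝ] ℝ × ℝ × ℝ,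
      (∀ z, F' z = (1 * (∫ r in (0:ℝ)..T, (-Real.sin (Real.pi / 2 + l r z0)) • l r) z +
        (∫ r in (0:ℝ)..T, Real.cos (Real.pi / 2 + l r z0)) * z.1,
      1 * (∫ r in (0:ℝ)..T, (Real.cos (Real.pi / 2 + l r z0)) • l r) z +
        (∫ r in (0:ℝ)..T, Real.sin (Real.pi / 2 + l r z0)) * z.1, l T z)) ∧
      HasStrictFDerivAt F F' z0 := ⟨_, fun z => rfl, s1.prodMk (s2.prodMk s3)⟩
  have hint1 : ∀ z, (∫ r in (0:ℝ)..T, (-Real.sin (Real.pi / 2 + l r z0)) • l r) z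
      = ∫ r in (0:ℝ)..T, (-Real.sin (Real.pi / 2 + θ r)) * path z r := by
    intro z
    rw [ContinuousLinearMap.intervalIntegral_apply]
    · simp [hlp, hpz0]
    · exact Continuous.intervalIntegrable (by fun_prop) _ _
  have hint2 : ∀ z, (∫ r in (0:ℝ)..T, (Real.cos (Real.pi / 2 + l r z0)) • l r) z
      = ∫ r in (0:ℝ)..T, (Real.cos (Real.pi / 2 + θ r)) * path z r := by
    intro z
    rw [ContinuousLinearMap.intervalIntegral_apply]
    · simp [hlp, hpz0]
    · exact Continuous.intervalIntegrable (by fun_prop) _ _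
  have hF'z : ∀ z, z.1 = 0 → F' z = DL θ T (path z) := by
    intro z hz
    rw [hF'd, hint1, hint2, hz, hlp]
    simp [DL]
  have hF' : ∀ z, F' z = z.1 • F' (1, 0, 0) + ρ • z.2.2 := by
    rintro ⟨a, s, v⟩
    have e : ((a, s, v) : ℝ × ℝ × (ℝ × ℝ × ℝ)) = a • (1, 0, 0) + (0, s, v) := by simp
    rw [e, map_add, map_smul, hF'z (0, s, v) rfl]
    obtain ⟨x, y, w⟩ := v
    simp only [path, map_add, map_sub, map_smul, da1, da2, da3, db1, db2, db3]
    simp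
    refine ⟨by ring, by ring, by ring⟩
  have hU : {z : ℝ × ℝ × (ℝ × ℝ × ℝ) | 0 < z.1 ∧ 6 * z.2.1 < z.1} ∈ 𝓝 z0 := by
    apply IsOpen.mem_nhds
    · exact (isOpen_lt continuous_const continuous_fst).inter (isOpen_lt (by fun_prop) continuous_fst)
    · simp [hz0]
  have := cone_cover F F' (F' (1,0,0)) ρ hρ hF hF' _ hU
  rw [← hz0, hF0] at this
  filter_upwards [this] with q hq
  obtain ⟨s, v, hs, hv, ⟨hq1, hq2⟩, hFq⟩ := hq
  obtain ⟨a, Q⟩ := q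
  simp only at hq1 hq2 hFq ⊢
  rw [← hFq]
  simp only [F, hlp]
  obtain ⟨x, y, w⟩ := v
  simp only [Prod.norm_def, Real.norm_eq_abs, max_le_iff, abs_le] at hv
  obtain ⟨⟨x1, x2⟩, ⟨y1, y2⟩, w1, w2⟩ := hv
  have hpe : ∀ r, path (a, s, x, y, w) r = (a - 6 * s) * θ r + (s + x / 2) * a1 r
      + (s - x / 2) * b1 r + (s + y / 2) * a2 r + (s - y / 2) * b2 r
      + (s + w / 2) * a3 r + (s - w / 2) * b3 r := by
    intro r; simp [path]; ring
  refine reach_scaled (path (a, s, x, y, w)) a T hq1 ?_ ?_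
  · intro p q
    have key : ∀ (c : ℝ) (η : C(ℝ, ℝ)), 0 ≤ c → η ∈ Adm →
        -(c * |p - q|) ≤ c * η p - c * η q ∧ c * η p - c * η q ≤ c * |p - q| := by
      intro c η hc hη
      have := abs_le.1 (abs_of_lip hη.1 p q)
      constructor <;> nlinarith
    have k0 := key (a - 6 * s) θ (by linarith) hθ
    have k1 := key (s + x / 2) a1 (by linarith) ha1
    have k2 := key (s - x / 2) b1 (by linarith) hb1
    have k3 := key (s + y / 2) a2 (by linarith) ha2
    have k4 := key (s - y / 2) b2 (by linarith) hb2
    have k5 := key (s + w / 2) a3 (by linarith) ha3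
    have k6 := key (s - w / 2) b3 (by linarith) hb3
    rw [hpe, hpe, abs_le]
    constructor <;> linarith
  · rw [hpe, hθ.2, ha1.2, ha2.2, ha3.2, hb1.2, hb2.2, hb3.2]; ring


/-- Extremality (maximum principle). -/
def DExt (θ : ℝ → ℝ) (T : ℝ) : Prop := ∃ (G : ℝ → ℝ) (ρ α : ℝ), 0 ≤ ρ ∧
  (∀ r, HasDerivAt G (ρ * Real.sin (θ r - α)) r) ∧ (ρ = 0 → ∀ r, G r ≠ 0) ∧
  ∀ x y s : ℝ, (s = 1 ∨ s = -1) → 0 ≤ x → x ≤ y → y ≤ T → (∀ r ∈ Set.Ioo x y, 0 < s * G r) →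
    θ y = θ x + s * (y - x)

lemma mono_clamp {φ : ℝ → ℝ} (h : Monotone φ) {x y : ℝ} (hxy : x ≤ y) {r r' : ℝ} (hr : r ≤ r') :
    φ (max x (min r' y)) - φ (max x (min r y)) ≤ φ r' - φ r := by
  rcases hr.eq_or_lt with rfl | hlt
  · simp
  have hA := h hr
  have hB := h hxy
  rcases le_total r y with h1 | h1 <;> rcases le_total r' y with h2 | h2 <;>
  rcases le_total r x with h3 | h3 <;> rcases le_total r' x with h4 | h4 <;>
  have e1 := h h1 <;> have e2 := h h2 <;> have e3 := h h3 <;> have e4 := h h4 <;>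
  simp only [min_eq_left, min_eq_right, max_eq_left, max_eq_right, *] <;>
  linarith

lemma slope_of_ext (θ : C(ℝ, ℝ)) (hθ : θ ∈ Adm) (T : ℝ) (p q c : ℝ)
    (hmax : ∀ η ∈ Adm, p * (DL θ T (η - θ)).1 + q * (DL θ T (η - θ)).2.1
      + c * (DL θ T (η - θ)).2.2 ≤ 0)
    (G : ℝ → ℝ) (hG : ∀ r, HasDerivAt G (p * Real.cos (θ r) + q * Real.sin (θ r)) r)
    (hGT : G T = c) (x y s : ℝ) (hs : s = 1 ∨ s = -1) (hx : 0 ≤ x) (hxy : x ≤ y) (hy : y ≤ T)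
    (hpos : ∀ r ∈ Set.Ioo x y, 0 < s * G r) : θ y = θ x + s * (y - x) := by
  have hss : s * s = 1 := by rcases hs with rfl | rfl <;> norm_num
  have hT : 0 ≤ T := hx.trans (hxy.trans hy)
  have hφ : Monotone fun r => r - s * θ r := by
    intro a b hab
    have := abs_le.1 (abs_of_lip hθ.1 b a)
    rw [abs_of_nonneg (by linarith)] at this
    rcases hs with rfl | rfl <;> simp only <;> linarith
  set φ : ℝ → ℝ := fun r => r - s * θ r with hφd
  have hφc : Continuous φ := by fun_prop
  let h : C(ℝ, ℝ) := ⟨fun r => s * (φ (max x (min r y)) - φ x), by fun_prop⟩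
  have hh : ∀ r, h r = s * (φ (max x (min r y)) - φ x) := fun r => rfl
  have hhm : Monotone fun r => s * h r := by
    intro a b hab
    simp only [hh, ← mul_assoc, hss, one_mul]
    have : φ (max x (min a y)) ≤ φ (max x (min b y)) :=
      hφ (max_le_max le_rfl (min_le_min hab le_rfl))
    linarith
  have hupper : ∀ a b, a ≤ b → s * h b - s * h a ≤ φ b - φ a := by
    intro a b hab
    simp only [hh, ← mul_assoc, hss, one_mul]
    have := mono_clamp hφ hxy hab
    linarith
  have hx0 : ∀ r ≤ x, h r = 0 := by
    intro r hr
    rw [hh, max_eq_left ((min_le_left _ _).trans hr)]; ring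
  have hy0 : ∀ r, y ≤ r → h r = s * (φ y - φ x) := by
    intro r hr
    rw [hh, min_eq_right hr, max_eq_right hxy]
  have hlip : LipschitzWith 1 (θ + h : C(ℝ, ℝ)) := by
    apply lip_of_abs
    have : ∀ a b, a ≤ b → |(θ + h) b - (θ + h) a| ≤ |b - a| := by
      intro a b hab
      have h1 := hhm hab
      have h2 := hupper a b hab
      have := abs_le.1 (abs_of_lip hθ.1 b a)
      rw [abs_of_nonneg (by linarith)] at this
      rw [abs_of_nonneg (sub_nonneg.2 hab), abs_le]
      simp only [ContinuousMap.add_apply, hφd] at *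
      rcases hs with rfl | rfl <;> constructor <;> linarith
    intro a b
    rcases le_total a b with hab | hab
    · rw [abs_sub_comm, abs_sub_comm a]; exact this a b hab
    · exact this b a hab
  have hadm : θ + h ∈ Adm := ⟨hlip, by simp [hθ.2, hx0 0 hx]⟩
  have hm := hmax _ hadm
  rw [add_sub_cancel_left] at hm
  have hhlip : LipschitzOnWith 2 h (Set.uIcc 0 T) := by
    have e : (h : ℝ → ℝ) = fun r => (θ + h) r - θ r := by ext; simp
    rw [e]
    have := hlip.sub hθ.1
    rw [one_add_one_eq_two] at this
    exact this.lipschitzOnWith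
  have hhac := hhlip.absolutelyContinuousOnInterval
  have hGd : deriv G = fun r => p * Real.cos (θ r) + q * Real.sin (θ r) := by
    ext r; exact (hG r).deriv
  have hGc1 : ContDiff ℝ 1 G := by
    rw [contDiff_one_iff_deriv]
    exact ⟨fun r => (hG r).differentiableAt, by rw [hGd]; fun_prop⟩
  have hGac : AbsolutelyContinuousOnInterval G 0 T :=
    (hGc1.contDiffOn (s := Set.uIcc 0 T)).absolutelyContinuousOnInterval
  have hparts := hGac.integral_mul_deriv_eq_deriv_mul hhac
  have hfun : p * (DL θ T h).1 + q * (DL θ T h).2.1 + c * (DL θ T h).2.2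
      = ∫ r in (0:ℝ)..T, G r * deriv h r := by
    rw [hparts, hGd, hx0 0 hx, hGT]
    simp only [DL, LinearMap.coe_mk, AddHom.coe_mk]
    rw [← intervalIntegral.integral_const_mul, ← intervalIntegral.integral_const_mul,
      ← intervalIntegral.integral_add]
    · rw [mul_zero, sub_zero, sub_eq_add_neg, ← intervalIntegral.integral_neg, add_comm]
      congr 1
      apply intervalIntegral.integral_congr
      intro r _
      simp only [add_comm (Real.pi / 2), Real.sin_add_pi_div_two, Real.cos_add_pi_div_two]
      ring
    · exact Continuous.intervalIntegrable (by fun_prop) _ _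
    · exact Continuous.intervalIntegrable (by fun_prop) _ _
  rw [hfun] at hm
  have hd0 : ∀ r, r < x ∨ y < r → deriv h r = 0 := by
    rintro r (hr | hr)
    · have : (h : ℝ → ℝ) =ᶠ[𝓝 r] fun _ => (0:ℝ) := by
        filter_upwards [Iio_mem_nhds hr] with t ht using hx0 t (le_of_lt ht)
      rw [this.deriv_eq]; simp
    · have : (h : ℝ → ℝ) =ᶠ[𝓝 r] fun _ => s * (φ y - φ x) := by
        filter_upwards [Ioi_mem_nhds hr] with t ht using hy0 t (le_of_lt ht)
      rw [this.deriv_eq]; simp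
  have hdn : ∀ r, 0 ≤ s * deriv h r := by
    intro r
    have := hhm.deriv_nonneg (x := r)
    have e : deriv (fun r => s * h r) r = s * deriv h r := by
      rcases hs with rfl | rfl <;> simp
    rwa [e] at this
  have hne : ∀ᵐ r : ℝ, r ≠ x ∧ r ≠ y := by
    have := (Set.toFinite ({x, y} : Set ℝ)).measure_zero volume
    have := compl_mem_ae_iff.2 this
    filter_upwards [this] with r hr
    simpa using hr
  have hnn : ∀ r, r ≠ x ∧ r ≠ y → 0 ≤ G r * deriv h r ∧ (G r * deriv h r = 0 → deriv h r = 0) := by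
    rintro r ⟨h1, h2⟩
    by_cases hr : r < x ∨ y < r
    · simp [hd0 r hr]
    · push Not at hr
      have hin := hpos r ⟨lt_of_le_of_ne hr.1 h1.symm, lt_of_le_of_ne hr.2 h2⟩
      have hg : G r ≠ 0 := by rintro h; simp [h] at hin
      refine ⟨?_, fun h => (mul_eq_zero.1 h).resolve_left hg⟩
      have := mul_nonneg hin.le (hdn r)
      calc 0 ≤ s * G r * (s * deriv h r) := this
        _ = (s * s) * (G r * deriv h r) := by ring
        _ = _ := by rw [hss, one_mul]
  have hae : ∀ᵐ r ∂(volume.restrict (Set.Ioc 0 T)), 0 ≤ G r * deriv h r :=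
    ae_restrict_of_ae (by filter_upwards [hne] with r hr using (hnn r hr).1)
  have hint : IntervalIntegrable (fun r => G r * deriv h r) volume 0 T :=
    hhac.intervalIntegrable_deriv.continuousOn_mul hGc1.continuous.continuousOn
  have hzero : ∫ r in (0:ℝ)..T, G r * deriv h r = 0 :=
    le_antisymm hm (intervalIntegral.integral_nonneg_of_ae_restrict hT (by
      rw [← restrict_Ioc_eq_restrict_Icc]; exact hae))
  rw [intervalIntegral.integral_eq_zero_iff_of_le_of_nonneg_ae hT hae hint] at hzero
  have hhT : ∫ r in (0:ℝ)..T, deriv h r = 0 := by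
    apply intervalIntegral.integral_zero_ae
    rw [Set.uIoc_of_le hT]
    have := (ae_restrict_iff' measurableSet_Ioc).1 hzero
    filter_upwards [this, hne] with r h1 h2 h3
    exact (hnn r h2).2 (h1 h3)
  rw [hhac.integral_deriv_eq_sub, hx0 0 hx, hy0 T hy, sub_zero] at hhT
  have : φ y - φ x = 0 := by
    rcases hs with rfl | rfl <;> linarith
  simp only [hφd] at this
  rcases hs with rfl | rfl <;> linarith

lemma ext_of_functional (θ : C(ℝ, ℝ)) (hθ : θ ∈ Adm) (T : ℝ)
    (f : ℝ × ℝ × ℝ →L[ℝ] ℝ) (hf : f ≠ 0) (hmax : ∀ η ∈ Adm, f (DL θ T (η - θ)) ≤ 0) :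
    DExt θ T := by
  set p := f (1, 0, 0) with hp
  set q := f (0, 1, 0) with hq
  set c := f (0, 0, 1) with hc
  have hfe : ∀ v : ℝ × ℝ × ℝ, f v = p * v.1 + q * v.2.1 + c * v.2.2 := by
    rintro ⟨x, y, z⟩
    have : ((x, y, z) : ℝ × ℝ × ℝ) = x • (1, 0, 0) + y • (0, 1, 0) + z • (0, 0, 1) := by simp
    rw [this, map_add, map_add, map_smul, map_smul, map_smul]
    simp only [smul_eq_mul, ← hp, ← hq, ← hc]
    simp
    ring
  let w : ℂ := ⟨q, -p⟩
  have hw1 : ‖w‖ * Real.cos w.arg = q := Complex.norm_mul_cos_arg w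
  have hw2 : ‖w‖ * Real.sin w.arg = -p := Complex.norm_mul_sin_arg w
  let G : ℝ → ℝ := fun r => c - ∫ t in r..T, (p * Real.cos (θ t) + q * Real.sin (θ t))
  have hG : ∀ r, HasDerivAt G (p * Real.cos (θ r) + q * Real.sin (θ r)) r := by
    intro r
    have hcont : Continuous fun t => p * Real.cos (θ t) + q * Real.sin (θ t) := by fun_prop
    have := intervalIntegral.integral_hasDerivAt_left (hcont.intervalIntegrable r T)
      (hcont.stronglyMeasurableAtFilter _ _) hcont.continuousAt
    simpa using this.const_sub c
  refine ⟨G, ‖w‖, w.arg, norm_nonneg _, ?_, ?_, ?_⟩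
  · intro r
    convert hG r using 1
    rw [Real.sin_sub, ← hw1]
    have : p = -(‖w‖ * Real.sin w.arg) := by rw [hw2]; ring
    rw [this]; ring
  · intro h0 r
    rw [h0] at hw1 hw2
    have q0 : q = 0 := by linarith
    have p0 : p = 0 := by linarith
    have : c ≠ 0 := by
      intro c0
      apply hf
      ext <;> simp [hfe, q0, p0, c0]
    simpa [G, q0, p0] using this
  · intro x y s hs hx hxy hy hpos
    refine slope_of_ext θ hθ T p q c ?_ G hG (by simp [G]) x y s hs hx hxy hy hpos
    intro η hη
    rw [← hfe]; exact hmax η hη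


lemma toA_open : IsOpenMap toA := by
  have : IsOpenMap (Prod.map id (Prod.map id (fun x : ℝ => (x : Real.Angle))) :
      ℝ × ℝ × ℝ → ℝ × ℝ × Real.Angle) :=
    IsOpenMap.id.prodMap (IsOpenMap.id.prodMap QuotientAddGroup.isOpenMap_coe)
  exact this

lemma all_ext (E : ℝ → ℝ × ℝ × Real.Angle)
    (hE : ContinuousOn E (Set.Ici 0)) (T : ℝ) (hT : 0 < T)
    (hmiss : ∀ t ∈ Set.Ico 0 T, E t ∉ DubinsReach t)
    (θ : ℝ → ℝ) (hθ : LipschitzWith 1 θ) (h0 : θ 0 = 0) (hEnd : toA (EndPt θ T) = E T) :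
    DExt θ T := by
  let θc : C(ℝ, ℝ) := ⟨θ, hθ.continuous⟩
  rcases ext_or_cover θc ⟨hθ, h0⟩ T with ⟨f, hf, hmax⟩ | hcov
  · exact ext_of_functional θc ⟨hθ, h0⟩ T f hf hmax
  exfalso
  have hop : IsOpenMap (Prod.map id toA : ℝ × (ℝ × ℝ × ℝ) → ℝ × (ℝ × ℝ × Real.Angle)) :=
    IsOpenMap.id.prodMap toA_open
  have him := hop.image_mem_nhds hcov
  have ht : Tendsto (fun t => (t / T, E t)) (𝓝[<] T) (𝓝 (1, E T)) := by
    apply Tendsto.prodMk_nhds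
    · have : Tendsto (fun t : ℝ => t / T) (𝓝 T) (𝓝 (T / T)) := (continuous_id.div_const T).tendsto T
      rw [div_self hT.ne'] at this
      exact this.mono_left nhdsWithin_le_nhds
    · have := (hE.continuousAt (Ici_mem_nhds hT)).tendsto
      exact this.mono_left nhdsWithin_le_nhds
  have e : Prod.map id toA ((1:ℝ), EndPt θc T) = (1, E T) := by
    rw [← hEnd]; rfl
  rw [e] at him
  have h1 := ht.eventually him
  have h2 : ∀ᶠ t in 𝓝[<] T, 0 < t := (eventually_gt_nhds hT).filter_mono nhdsWithin_le_nhds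
  have h3 : ∀ᶠ t in 𝓝[<] T, t < T := eventually_mem_nhdsWithin
  obtain ⟨t, ⟨⟨a, P⟩, hm, hq⟩, ht0, htT⟩ := (h1.and (h2.and h3)).exists
  apply hmiss t ⟨ht0.le, htT⟩
  simp only [Prod.map_apply, id, Prod.mk.injEq] at hq
  rw [← hq.2]
  have := hm
  simp only [Set.mem_ofPred_eq, hq.1] at this
  rwa [div_mul_cancel₀ _ hT.ne'] at this

/-- Reduction modulo `2π`. -/
lemma red2pi {l : ℝ} (hl : 0 ≤ l) : ∃ (τ : ℝ) (j : ℕ), 0 ≤ τ ∧ τ < 2 * Real.pi ∧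
    l = τ + j * (2 * Real.pi) := by
  have h2 : 0 < 2 * Real.pi := by positivity
  refine ⟨l - ⌊l / (2 * Real.pi)⌋₊ * (2 * Real.pi), ⌊l / (2 * Real.pi)⌋₊, ?_, ?_, by ring⟩
  · have := Nat.floor_le (div_nonneg hl h2.le)
    rw [le_div_iff₀ h2] at this; linarith
  · have := Nat.lt_floor_add_one (l / (2 * Real.pi))
    rw [div_lt_iff₀ h2] at this; linarith

lemma cos_per {x y : ℝ} (m : ℤ) (h : x = y + m * (2 * Real.pi)) : Real.cos x = Real.cos y := by
  rw [h, Real.cos_add_int_mul_two_pi]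
lemma sin_per {x y : ℝ} (m : ℤ) (h : x = y + m * (2 * Real.pi)) : Real.sin x = Real.sin y := by
  rw [h, Real.sin_add_int_mul_two_pi]
lemma ang_per {x y : ℝ} (m : ℤ) (h : x = y + m * (2 * Real.pi)) : (x : Real.Angle) = y := by
  rw [Real.Angle.angle_eq_iff_two_pi_dvd_sub]
  exact ⟨m, by rw [h]; ring⟩

lemma mem_CSC {T s σ l1 d l3 : ℝ} (k : ℕ) (hs : s = 1 ∨ s = -1) (hσ : σ = 1 ∨ σ = -1)
    (h1 : 0 ≤ l1) (hd : 0 ≤ d) (h3 : 0 ≤ l3) (hsum : l1 + d + l3 + k * (2 * Real.pi) = T) :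
    (s * (Real.cos l1 - 1 - d * Real.sin l1) + σ * (Real.cos (s * l1 + σ * l3) - Real.cos l1),
     Real.sin l1 + d * Real.cos l1 - σ * (s * Real.sin l1 - Real.sin (s * l1 + σ * l3)),
     ((Real.pi / 2 + s * l1 + σ * l3 : ℝ) : Real.Angle)) ∈ ECSC T := by
  obtain ⟨τ, j, hτ0, hτ1, rfl⟩ := red2pi h1
  have hm : ∃ m : ℤ, s * (τ + j * (2 * Real.pi)) + σ * l3
      = s * τ + σ * (T - (τ + d)) + m * (2 * Real.pi) := by
    rcases hs with rfl | rfl <;> rcases hσ with rfl | rfl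
    · exact ⟨-k, by push_cast; linarith⟩
    · exact ⟨2 * j + k, by push_cast; linarith⟩
    · exact ⟨-(2 * j + k), by push_cast; linarith⟩
    · exact ⟨k, by push_cast; linarith⟩
  obtain ⟨m, hm⟩ := hm
  have hj : 0 ≤ (j:ℝ) * (2 * Real.pi) := by positivity
  have hk : 0 ≤ (k:ℝ) * (2 * Real.pi) := by positivity
  refine ⟨s, σ, τ, τ + d, hs, hσ, ⟨hτ0, hτ1⟩, ⟨by linarith, by linarith⟩, ?_⟩
  rw [cos_per m hm, sin_per m hm, cos_per (x := τ + j * (2 * Real.pi)) (y := τ) j (by push_cast; ring),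
    sin_per (x := τ + j * (2 * Real.pi)) (y := τ) j (by push_cast; ring),
    ang_per (y := Real.pi / 2 + s * τ + σ * (T - (τ + d))) m (by linarith)]
  simp only [PCSC, add_sub_cancel_left]

lemma mem_CCC {T s l1 l2 l3 : ℝ} (hs : s = 1 ∨ s = -1)
    (h1 : 0 ≤ l1) (h2 : 0 ≤ l2) (h3 : 0 ≤ l3) (hsum : l1 + l2 + l3 = T) :
    (s * (2 * Real.cos l1 - 1 - 2 * Real.cos (l1 - l2) + Real.cos (l1 - l2 + l3)),
     2 * Real.sin l1 - 2 * Real.sin (l1 - l2) + Real.sin (l1 - l2 + l3),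
     ((Real.pi / 2 + s * (l1 - l2 + l3) : ℝ) : Real.Angle)) ∈ ECCC T := by
  obtain ⟨τ, j, hτ0, hτ1, rfl⟩ := red2pi h1
  obtain ⟨δ, i, hδ0, hδ1, rfl⟩ := red2pi h2
  have hj : 0 ≤ (j:ℝ) * (2 * Real.pi) := by positivity
  have hi : 0 ≤ (i:ℝ) * (2 * Real.pi) := by positivity
  have hm : τ + j * (2 * Real.pi) - (δ + i * (2 * Real.pi)) + l3
      = 2 * τ - 2 * (τ + δ) + T + (-(2 * i) : ℤ) * (2 * Real.pi) := by push_cast; linarith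
  have hm2 : τ + j * (2 * Real.pi) - (δ + i * (2 * Real.pi))
      = 2 * τ - (τ + δ) + (j - i : ℤ) * (2 * Real.pi) := by push_cast; linarith
  have hang : ∃ m : ℤ, Real.pi / 2 + s * (τ + j * (2 * Real.pi) - (δ + i * (2 * Real.pi)) + l3)
      = Real.pi / 2 + s * (2 * τ - 2 * (τ + δ) + T) + m * (2 * Real.pi) := by
    rcases hs with rfl | rfl
    · exact ⟨-(2 * i), by rw [hm]; push_cast; ring⟩
    · exact ⟨2 * i, by rw [hm]; push_cast; ring⟩
  obtain ⟨m, hang⟩ := hang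
  refine ⟨s, τ, τ + δ, hs, ⟨hτ0, hτ1⟩, ⟨by linarith, by linarith⟩, ⟨by linarith, by linarith⟩, ?_⟩
  rw [ang_per m hang, cos_per _ hm, sin_per _ hm, cos_per _ hm2, sin_per _ hm2,
    cos_per (x := τ + j * (2 * Real.pi)) (y := τ) j (by push_cast; ring),
    sin_per (x := τ + j * (2 * Real.pi)) (y := τ) j (by push_cast; ring)]
  rfl

/-- `θ` has slope `s` on `[x, y]`. -/
def Lin (θ : ℝ → ℝ) (x y s : ℝ) : Prop := ∀ r ∈ Set.Icc x y, θ r = θ x + s * (r - x)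

lemma arc_int {θ : ℝ → ℝ} {x y s : ℝ} (hxy : x ≤ y) (hs : s = 1 ∨ s = -1) (h : Lin θ x y s) :
    (∫ r in x..y, Real.cos (Real.pi / 2 + θ r)) = s * (Real.cos (θ y) - Real.cos (θ x)) ∧
    (∫ r in x..y, Real.sin (Real.pi / 2 + θ r)) = s * (Real.sin (θ y) - Real.sin (θ x)) := by
  have hss : s * s = 1 := by rcases hs with rfl | rfl <;> norm_num
  have hy := h y ⟨hxy, le_rfl⟩
  have hu : Set.uIcc x y = Set.Icc x y := Set.uIcc_of_le hxy
  have key : ∀ r, HasDerivAt (fun r => θ x + s * (r - x)) s r := fun r => by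
    simpa using (((hasDerivAt_id r).sub_const x).const_mul s).const_add (θ x)
  constructor
  · rw [intervalIntegral.integral_congr (g := fun r => -Real.sin (θ x + s * (r - x)))]
    · rw [intervalIntegral.integral_eq_sub_of_hasDerivAt
        (f := fun r => s * Real.cos (θ x + s * (r - x)))]
      · rw [hy]; simp; ring
      · intro r _
        have h2 := ((key r).cos).const_mul s
        have e : s * (-Real.sin (θ x + s * (r - x)) * s) = -Real.sin (θ x + s * (r - x)) := by
          linear_combination -(Real.sin (θ x + s * (r - x))) * hss
        rw [e] at h2
        exact h2
      · exact Continuous.intervalIntegrable (by fun_prop) _ _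
    · intro r hr
      rw [hu] at hr
      simp only [add_comm (Real.pi / 2), Real.cos_add_pi_div_two, h r hr]
  · rw [intervalIntegral.integral_congr (g := fun r => Real.cos (θ x + s * (r - x)))]
    · rw [intervalIntegral.integral_eq_sub_of_hasDerivAt
        (f := fun r => s * Real.sin (θ x + s * (r - x)))]
      · rw [hy]; simp; ring
      · intro r _
        have h2 := ((key r).sin).const_mul s
        have e : s * (Real.cos (θ x + s * (r - x)) * s) = Real.cos (θ x + s * (r - x)) := by
          linear_combination (Real.cos (θ x + s * (r - x))) * hss
        rw [e] at h2
        exact h2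
      · exact Continuous.intervalIntegrable (by fun_prop) _ _
    · intro r hr
      rw [hu] at hr
      simp only [add_comm (Real.pi / 2), Real.sin_add_pi_div_two, h r hr]

lemma endpt_split {θ : ℝ → ℝ} (hθ : Continuous θ) (x y T : ℝ) :
    EndPt θ T = ((∫ r in (0:ℝ)..x, Real.cos (Real.pi / 2 + θ r)) + (∫ r in x..y, Real.cos (Real.pi / 2 + θ r))
      + (∫ r in y..T, Real.cos (Real.pi / 2 + θ r)),
      (∫ r in (0:ℝ)..x, Real.sin (Real.pi / 2 + θ r)) + (∫ r in x..y, Real.sin (Real.pi / 2 + θ r))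
      + (∫ r in y..T, Real.sin (Real.pi / 2 + θ r)), Real.pi / 2 + θ T) := by
  have hc : Continuous fun r => Real.cos (Real.pi / 2 + θ r) := by fun_prop
  have hs : Continuous fun r => Real.sin (Real.pi / 2 + θ r) := by fun_prop
  rw [intervalIntegral.integral_add_adjacent_intervals, intervalIntegral.integral_add_adjacent_intervals,
    intervalIntegral.integral_add_adjacent_intervals, intervalIntegral.integral_add_adjacent_intervals]
  · rfl
  all_goals first | exact hc.intervalIntegrable _ _ | exact hs.intervalIntegrable _ _

lemma cos_sgn {s : ℝ} (hs : s = 1 ∨ s = -1) (u : ℝ) : Real.cos (s * u) = Real.cos u := by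
  rcases hs with rfl | rfl <;> simp
lemma sin_sgn {s : ℝ} (hs : s = 1 ∨ s = -1) (u : ℝ) : Real.sin (s * u) = s * Real.sin u := by
  rcases hs with rfl | rfl <;> simp
lemma mem_of_eq3 {S : Set (ℝ × ℝ × Real.Angle)} {a b c : ℝ} {a' b' : ℝ} {c' : Real.Angle}
    (h1 : a = a') (h2 : b = b') (h3 : (c : Real.Angle) = c') (h : (a', b', c') ∈ S) :
    toA (a, b, c) ∈ S := by
  subst h1 h2 h3; exact h

/-- three arcs. -/
lemma three_arcs {θ : ℝ → ℝ} (hθ : Continuous θ) (h0 : θ 0 = 0) {x y T s1 s2 s3 : ℝ}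
    (hx : 0 ≤ x) (hxy : x ≤ y) (hy : y ≤ T) (e1 : s1 = 1 ∨ s1 = -1) (e2 : s2 = 1 ∨ s2 = -1)
    (e3 : s3 = 1 ∨ s3 = -1) (l1 : Lin θ 0 x s1) (l2 : Lin θ x y s2) (l3 : Lin θ y T s3) :
    toA (EndPt θ T) ∈ ECSC T ∪ ECCC T := by
  rw [endpt_split hθ x y T]
  obtain ⟨a1, b1⟩ := arc_int hx e1 l1
  obtain ⟨a2, b2⟩ := arc_int hxy e2 l2
  obtain ⟨a3, b3⟩ := arc_int hy e3 l3
  have t1 := l1 x ⟨hx, le_rfl⟩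
  have t2 := l2 y ⟨hxy, le_rfl⟩
  have t3 := l3 T ⟨hy, le_rfl⟩
  rw [a1, a2, a3, b1, b2, b3, t3, t2, t1, h0]
  have q1 : s1 * s1 = 1 := by rcases e1 with rfl | rfl <;> norm_num
  rw [show 0 + s1 * (x - 0) = s1 * x by ring]
  by_cases c1 : s1 = s2
  · left
    have := mem_CSC (T := T) (s := s1) (σ := s3) (l1 := y) (d := 0) (l3 := T - y) 0 e1 e3
      (hx.trans hxy) le_rfl (by linarith) (by simp)
    refine mem_of_eq3 ?_ ?_ ?_ this
    all_goals subst c1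
    · rw [show s1 * x + s1 * (y - x) = s1 * y by ring]
      simp only [cos_sgn e1, Real.cos_zero]; ring
    · rw [show s1 * x + s1 * (y - x) = s1 * y by ring]
      simp only [sin_sgn e1, Real.sin_zero]; linear_combination Real.sin y * q1
    · congr 1; ring
  by_cases c2 : s2 = s3
  · left
    have := mem_CSC (T := T) (s := s1) (σ := s3) (l1 := x) (d := 0) (l3 := T - x) 0 e1 e3
      hx le_rfl (by linarith) (by simp)
    refine mem_of_eq3 ?_ ?_ ?_ this
    all_goals subst c2
    · rw [show s1 * x + s2 * (y - x) + s2 * (T - y) = s1 * x + s2 * (T - x) by ring]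
      simp only [cos_sgn e1, Real.cos_zero]; ring
    · rw [show s1 * x + s2 * (y - x) + s2 * (T - y) = s1 * x + s2 * (T - x) by ring]
      simp only [sin_sgn e1, Real.sin_zero]; linear_combination Real.sin x * q1
    · congr 1; ring
  have c3 : s2 = -s1 := by
    rcases e1 with rfl | rfl <;> rcases e2 with rfl | rfl <;> simp_all
  have c4 : s3 = s1 := by
    rw [c3] at c2
    rcases e1 with rfl | rfl <;> rcases e3 with rfl | rfl <;>
      first | rfl | exact absurd (by norm_num) c2
  right
  have := mem_CCC (T := T) (s := s1) (l1 := x) (l2 := y - x) (l3 := T - y) e1 hx (by linarith)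
    (by linarith) (by ring)
  refine mem_of_eq3 ?_ ?_ ?_ this
  all_goals rw [c3, c4, show s1 * x + -s1 * (y - x) + s1 * (T - y) = s1 * (x - (y - x) + (T - y)) by ring]
  · rw [show s1 * x + -s1 * (y - x) = s1 * (x - (y - x)) by ring]
    simp only [cos_sgn e1, Real.cos_zero]; ring
  · rw [show s1 * x + -s1 * (y - x) = s1 * (x - (y - x)) by ring]
    simp only [sin_sgn e1, Real.sin_zero]
    linear_combination (2 * Real.sin x - 2 * Real.sin (x - (y - x)) + Real.sin (x - (y - x) + (T - y))) * q1

/-- The extremality data. -/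
def DX (θ : ℝ → ℝ) (T : ℝ) (G : ℝ → ℝ) (ρ α : ℝ) : Prop := 0 ≤ ρ ∧
  (∀ r, HasDerivAt G (ρ * Real.sin (θ r - α)) r) ∧ (ρ = 0 → ∀ r, G r ≠ 0) ∧
  ∀ x y s : ℝ, (s = 1 ∨ s = -1) → 0 ≤ x → x ≤ y → y ≤ T → (∀ r ∈ Set.Ioo x y, 0 < s * G r) →
    θ y = θ x + s * (y - x)

lemma DX.cont {θ : ℝ → ℝ} {T : ℝ} {G : ℝ → ℝ} {ρ α : ℝ} (h : DX θ T G ρ α) : Continuous G :=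
  continuous_iff_continuousAt.2 fun r => (h.2.1 r).continuousAt

lemma DX.pos {θ : ℝ → ℝ} {T : ℝ} {G : ℝ → ℝ} {ρ α : ℝ} (h : DX θ T G ρ α) {z : ℝ} (hz : G z = 0) :
    0 < ρ := lt_of_le_of_ne h.1 fun e => h.2.2.1 e.symm z hz

lemma DX.exc {θ : ℝ → ℝ} {T : ℝ} {G : ℝ → ℝ} {ρ α : ℝ} (h : DX θ T G ρ α) {x y : ℝ} (hx : 0 ≤ x)
    (hxy : x ≤ y) (hy : y ≤ T) (hG : ∀ r ∈ Set.Ioo x y, G r ≠ 0) :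
    ∃ s : ℝ, (s = 1 ∨ s = -1) ∧ (∀ r ∈ Set.Ioo x y, 0 < s * G r) ∧ Lin θ x y s := by
  have hs : ∃ s : ℝ, (s = 1 ∨ s = -1) ∧ (∀ r ∈ Set.Ioo x y, 0 < s * G r) := by
    by_cases hp : ∀ r ∈ Set.Ioo x y, 0 < G r
    · exact ⟨1, Or.inl rfl, by simpa using hp⟩
    · push Not at hp
      obtain ⟨r0, hr0, hr0n⟩ := hp
      refine ⟨-1, Or.inr rfl, fun r hr => ?_⟩
      by_contra hc
      have hr' : 0 ≤ G r := by linarith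
      obtain ⟨c, hc1, hc2⟩ := isPreconnected_Ioo.intermediate_value hr0 hr h.cont.continuousOn
        (show (0:ℝ) ∈ Set.Icc (G r0) (G r) from ⟨hr0n, hr'⟩)
      exact hG c hc1 hc2
  obtain ⟨s, hs1, hs2⟩ := hs
  refine ⟨s, hs1, hs2, fun r hr => ?_⟩
  exact h.2.2.2 x r s hs1 hx hr.1 (hr.2.trans hy) fun q hq => hs2 q ⟨hq.1, hq.2.trans_le hr.2⟩

lemma DX.energy {θ : ℝ → ℝ} {T : ℝ} {G : ℝ → ℝ} {ρ α : ℝ} (h : DX θ T G ρ α) (hθ : Continuous θ)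
    {x y s : ℝ} (hxy : x ≤ y) (hs : s = 1 ∨ s = -1) (hl : Lin θ x y s) :
    G y - G x = s * ρ * (Real.cos (θ x - α) - Real.cos (θ y - α)) := by
  have hss : s * s = 1 := by rcases hs with rfl | rfl <;> norm_num
  have hy := hl y ⟨hxy, le_rfl⟩
  have hu : Set.uIcc x y = Set.Icc x y := Set.uIcc_of_le hxy
  have key : ∀ r, HasDerivAt (fun r => θ x + s * (r - x) - α) s r := fun r => by
    simpa using ((((hasDerivAt_id r).sub_const x).const_mul s).const_add (θ x)).sub_const α
  rw [← intervalIntegral.integral_eq_sub_of_hasDerivAt (fun r _ => h.2.1 r)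
    (Continuous.intervalIntegrable (by fun_prop) _ _)]
  rw [intervalIntegral.integral_congr (g := fun r => ρ * Real.sin (θ x + s * (r - x) - α))]
  · rw [intervalIntegral.integral_eq_sub_of_hasDerivAt
        (f := fun r => -(s * ρ) * Real.cos (θ x + s * (r - x) - α))]
    · rw [hy]; simp; ring
    · intro r _
      have h2 := ((key r).cos).const_mul (-(s * ρ))
      have e : -(s * ρ) * (-Real.sin (θ x + s * (r - x) - α) * s)
          = ρ * Real.sin (θ x + s * (r - x) - α) := by
        linear_combination (ρ * Real.sin (θ x + s * (r - x) - α)) * hss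
      rw [e] at h2
      exact h2
    · exact Continuous.intervalIntegrable (by fun_prop) _ _
  · intro r hr
    rw [hu] at hr
    simp only [hl r hr]

lemma DX.cos_eq {θ : ℝ → ℝ} {T : ℝ} {G : ℝ → ℝ} {ρ α : ℝ} (h : DX θ T G ρ α) (hθ : Continuous θ)
    {x y s : ℝ} (hxy : x ≤ y) (hs : s = 1 ∨ s = -1) (hl : Lin θ x y s) (hx : G x = 0) (hy : G y = 0) :
    Real.cos (θ x - α) = Real.cos (θ y - α) := by
  have := h.energy hθ hxy hs hl
  have hρ := h.pos hx
  rw [hx, hy, sub_zero] at this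
  have hs0 : s ≠ 0 := by rcases hs with rfl | rfl <;> norm_num
  have h3 := (mul_eq_zero.1 this.symm).resolve_left (mul_ne_zero hs0 hρ.ne')
  linarith

/-- three zero-free pieces. -/
lemma three_free {θ : ℝ → ℝ} {T : ℝ} {G : ℝ → ℝ} {ρ α : ℝ} (h : DX θ T G ρ α) (hθ : Continuous θ)
    (h0 : θ 0 = 0) {a b : ℝ} (ha : 0 ≤ a) (hab : a ≤ b) (hb : b ≤ T)
    (f1 : ∀ r ∈ Set.Ioo 0 a, G r ≠ 0) (f2 : ∀ r ∈ Set.Ioo a b, G r ≠ 0)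
    (f3 : ∀ r ∈ Set.Ioo b T, G r ≠ 0) : toA (EndPt θ T) ∈ ECSC T ∪ ECCC T := by
  obtain ⟨s1, e1, -, l1⟩ := h.exc le_rfl ha (hab.trans hb) f1
  obtain ⟨s2, e2, -, l2⟩ := h.exc ha hab hb f2
  obtain ⟨s3, e3, -, l3⟩ := h.exc (ha.trans hab) hb le_rfl f3
  exact three_arcs hθ h0 ha hab hb e1 e2 e3 l1 l2 l3

lemma few_zeros {θ : ℝ → ℝ} {T : ℝ} {G : ℝ → ℝ} {ρ α : ℝ} (h : DX θ T G ρ α) (hθ : Continuous θ)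
    (h0 : θ 0 = 0) (hT : 0 ≤ T)
    (h3 : ¬ ∃ a b c, 0 < a ∧ a < b ∧ b < c ∧ c < T ∧ G a = 0 ∧ G b = 0 ∧ G c = 0) :
    toA (EndPt θ T) ∈ ECSC T ∪ ECCC T := by
  by_cases h1 : ∃ z ∈ Set.Ioo 0 T, G z = 0
  · obtain ⟨z, hz, hGz⟩ := h1
    by_cases h2 : ∃ w ∈ Set.Ioo 0 T, w ≠ z ∧ G w = 0
    · obtain ⟨w, hw, hwz, hGw⟩ := h2
      have : ∃ a b, 0 < a ∧ a < b ∧ b < T ∧ G a = 0 ∧ G b = 0 := by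
        rcases lt_or_gt_of_ne hwz with hlt | hlt
        · exact ⟨w, z, hw.1, hlt, hz.2, hGw, hGz⟩
        · exact ⟨z, w, hz.1, hlt, hw.2, hGz, hGw⟩
      obtain ⟨a, b, ha, hab, hb, hGa, hGb⟩ := this
      refine three_free h hθ h0 ha.le hab.le hb.le ?_ ?_ ?_
      · exact fun r hr e => h3 ⟨r, a, b, hr.1, hr.2, hab, hb, e, hGa, hGb⟩
      · exact fun r hr e => h3 ⟨a, r, b, ha, hr.1, hr.2, hb, hGa, e, hGb⟩
      · exact fun r hr e => h3 ⟨a, b, r, ha, hab, hr.1, hr.2, hGa, hGb, e⟩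
    · push Not at h2
      refine three_free h hθ h0 hz.1.le le_rfl hz.2.le ?_ ?_ ?_
      · exact fun r hr => h2 r ⟨hr.1, hr.2.trans hz.2⟩ hr.2.ne
      · exact fun r hr => absurd (hr.1.trans hr.2) (lt_irrefl _)
      · exact fun r hr => h2 r ⟨hz.1.trans hr.1, hr.2⟩ hr.1.ne'
  · push Not at h1
    refine three_free h hθ h0 le_rfl le_rfl hT ?_ ?_ h1
    · exact fun r hr => absurd (hr.1.trans hr.2) (lt_irrefl _)
    · exact fun r hr => absurd (hr.1.trans hr.2) (lt_irrefl _)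

/-- concatenation property for the straight/loop part. -/
def QQ (θ : ℝ → ℝ) (x y : ℝ) : Prop := ∃ k : ℕ, k * (2 * Real.pi) ≤ y - x ∧
  (∃ m : ℤ, θ y = θ x + m * (2 * Real.pi)) ∧
  (∫ r in x..y, Real.cos (Real.pi / 2 + θ r)) = (y - x - k * (2 * Real.pi)) * Real.cos (Real.pi / 2 + θ x) ∧
  (∫ r in x..y, Real.sin (Real.pi / 2 + θ r)) = (y - x - k * (2 * Real.pi)) * Real.sin (Real.pi / 2 + θ x)

lemma QQ.trans {θ : ℝ → ℝ} (hθ : Continuous θ) {x y z : ℝ} (h1 : QQ θ x y) (h2 : QQ θ y z) :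
    QQ θ x z := by
  obtain ⟨k, hk, ⟨m, hm⟩, hc, hs⟩ := h1
  obtain ⟨k', hk', ⟨m', hm'⟩, hc', hs'⟩ := h2
  have hcc : Continuous fun r => Real.cos (Real.pi / 2 + θ r) := by fun_prop
  have hsc : Continuous fun r => Real.sin (Real.pi / 2 + θ r) := by fun_prop
  refine ⟨k + k', by push_cast; linarith, ⟨m + m', by push_cast; linarith⟩, ?_, ?_⟩
  · rw [← intervalIntegral.integral_add_adjacent_intervals (hcc.intervalIntegrable x y)
      (hcc.intervalIntegrable y z), hc, hc', cos_per (x := Real.pi / 2 + θ y) m (by rw [hm, add_assoc])]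
    push_cast; ring
  · rw [← intervalIntegral.integral_add_adjacent_intervals (hsc.intervalIntegrable x y)
      (hsc.intervalIntegrable y z), hs, hs', sin_per (x := Real.pi / 2 + θ y) m (by rw [hm, add_assoc])]
    push_cast; ring

lemma const_of_sin {θ : ℝ → ℝ} (hθ : Continuous θ) {x y α : ℝ}
    (h : ∀ r ∈ Set.Icc x y, Real.sin (θ r - α) = 0) : ∀ r ∈ Set.Icc x y, θ r = θ x := by
  intro r hr
  by_contra hne
  set w := max (-1) (min 1 (θ r - θ x)) with hw
  have hd : θ r - θ x ≠ 0 := sub_ne_zero.2 hne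
  have hw0 : w ≠ 0 := by
    intro e
    rw [e] at hw
    rcases le_total 1 (θ r - θ x) with h1 | h1
    · rw [min_eq_left h1] at hw; norm_num at hw
    · rw [min_eq_right h1] at hw
      rcases le_total (-1) (θ r - θ x) with h2 | h2
      · rw [max_eq_right h2] at hw; exact hd hw.symm
      · rw [max_eq_left h2] at hw; norm_num at hw
  have hw1 : -1 ≤ w := le_max_left _ _
  have hw2 : w ≤ 1 := max_le (by norm_num) (min_le_left _ _)
  have hmem : θ x + w ∈ Set.uIcc (θ x) (θ r) := by
    rw [Set.mem_uIcc]
    rcases le_total (θ x) (θ r) with h1 | h1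
    · left
      have : 0 ≤ min 1 (θ r - θ x) := le_min (by norm_num) (by linarith)
      have e : w = min 1 (θ r - θ x) := max_eq_right (by linarith)
      have := min_le_right 1 (θ r - θ x)
      constructor <;> linarith
    · right
      have e1 : min 1 (θ r - θ x) = θ r - θ x := min_eq_right (by linarith)
      rw [e1] at hw
      constructor
      · have := le_max_right (-1) (θ r - θ x); linarith
      · have : w ≤ 0 := max_le (by norm_num) (by linarith)
        linarith
  obtain ⟨q, hq, hqe⟩ := intermediate_value_uIcc hθ.continuousOn hmem
  rw [Set.uIcc_of_le hr.1] at hq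
  have s1 := h q ⟨hq.1, hq.2.trans hr.2⟩
  have s0 := h x ⟨le_rfl, hr.1.trans hr.2⟩
  rw [hqe, show θ x + w - α = (θ x - α) + w by ring, Real.sin_add, s0, zero_mul, zero_add] at s1
  have hc : Real.cos (θ x - α) ≠ 0 := by
    intro e
    have := Real.sin_sq_add_cos_sq (θ x - α)
    rw [s0, e] at this; norm_num at this
  have hsw := (mul_eq_zero.1 s1).resolve_left hc
  have hpi := Real.pi_gt_three
  exact hw0 ((Real.sin_eq_zero_iff_of_lt_of_lt (by linarith) (by linarith)).1 hsw)

lemma two_pi_of {x y : ℝ} (h : Real.cos x = Real.cos y) (hx : Real.sin x = 0) :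
    ∃ m : ℤ, y = x + m * (2 * Real.pi) := by
  obtain ⟨k, hk⟩ := Real.cos_eq_cos_iff.1 h
  obtain ⟨n, hn⟩ := Real.sin_eq_zero_iff.1 hx
  rcases hk with hk | hk
  · exact ⟨k, by rw [hk]; ring⟩
  · exact ⟨k - n, by push_cast; rw [hk, ← hn]; ring⟩

lemma nat_of_int {s l : ℝ} (hs : s = 1 ∨ s = -1) (hl : 0 < l) {m : ℤ} (h : s * l = m * (2 * Real.pi)) :
    ∃ N : ℕ, 1 ≤ N ∧ l = N * (2 * Real.pi) := by
  have hp := Real.pi_pos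
  have : ∃ M : ℤ, l = M * (2 * Real.pi) := by
    rcases hs with rfl | rfl
    · exact ⟨m, by linarith⟩
    · exact ⟨-m, by push_cast; linarith⟩
  obtain ⟨M, hM⟩ := this
  have hM0 : 0 < M := by
    by_contra hc
    have : (M:ℝ) ≤ 0 := by exact_mod_cast not_lt.1 hc
    nlinarith
  lift M to ℕ using hM0.le
  exact ⟨M, by exact_mod_cast hM0, by exact_mod_cast hM⟩

lemma QQ_all {θ : ℝ → ℝ} {T : ℝ} {G : ℝ → ℝ} {ρ α : ℝ} (h : DX θ T G ρ α) (hθ : Continuous θ)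
    (hz : ∀ r ∈ Set.Ioo 0 T, G r = 0 → Real.sin (θ r - α) = 0) (n : ℕ) :
    ∀ x y : ℝ, 0 ≤ x → x ≤ y → y ≤ T → (G x = 0 ∧ Real.sin (θ x - α) = 0) →
      (G y = 0 ∧ Real.sin (θ y - α) = 0) → y - x < n * (2 * Real.pi) → QQ θ x y := by
  induction n with
  | zero => intro x y _ hxy _ _ _ hlt; norm_num at hlt; linarith
  | succ n ih =>
    intro x y hx hxy hy hZx hZy hlt
    by_cases hG : ∀ r ∈ Set.Ioo x y, G r = 0
    · have hsin : ∀ r ∈ Set.Icc x y, Real.sin (θ r - α) = 0 := by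
        intro r hr
        rcases hr.1.eq_or_lt with e | h1
        · rw [← e]; exact hZx.2
        rcases hr.2.eq_or_lt with e | h2
        · rw [e]; exact hZy.2
        exact hz r ⟨hx.trans_lt h1, h2.trans_le hy⟩ (hG r ⟨h1, h2⟩)
      have hc := const_of_sin hθ hsin
      refine ⟨0, by simpa using hxy, ⟨0, by simpa using hc y ⟨hxy, le_rfl⟩⟩, ?_, ?_⟩
      · rw [intervalIntegral.integral_congr (g := fun _ => Real.cos (Real.pi / 2 + θ x))]
        · simp
        · intro r hr
          rw [Set.uIcc_of_le hxy] at hr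
          simp only [hc r hr]
      · rw [intervalIntegral.integral_congr (g := fun _ => Real.sin (Real.pi / 2 + θ x))]
        · simp
        · intro r hr
          rw [Set.uIcc_of_le hxy] at hr
          simp only [hc r hr]
    · push Not at hG
      obtain ⟨r, hr, hGr⟩ := hG
      have hcl : IsClosed {q | G q = 0 ∧ Real.sin (θ q - α) = 0} :=
        (isClosed_eq h.cont continuous_const).inter
          (isClosed_eq (by fun_prop) continuous_const)
      obtain ⟨c, ⟨hc1, hc2⟩, hcmax⟩ := (isCompact_Icc (a := x) (b := r)).inter_right hcl |>.exists_isGreatest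
        ⟨x, ⟨le_rfl, hr.1.le⟩, hZx⟩
      obtain ⟨d, ⟨hd1, hd2⟩, hdmin⟩ := (isCompact_Icc (a := r) (b := y)).inter_right hcl |>.exists_isLeast
        ⟨y, ⟨hr.2.le, le_rfl⟩, hZy⟩
      have hcr : c < r := lt_of_le_of_ne hc1.2 fun e => hGr (e ▸ hc2.1)
      have hrd : r < d := lt_of_le_of_ne hd1.1 fun e => hGr (e ▸ hd2.1)
      have hfree : ∀ q ∈ Set.Ioo c d, G q ≠ 0 := by
        intro q hq e
        have hs := hz q ⟨(hx.trans hc1.1).trans_lt hq.1, hq.2.trans_le (hd1.2.trans hy)⟩ e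
        rcases le_total q r with hqr | hqr
        · exact absurd (hcmax ⟨⟨hc1.1.trans hq.1.le, hqr⟩, e, hs⟩) (not_le.2 hq.1)
        · exact absurd (hdmin ⟨⟨hqr, hq.2.le.trans hd1.2⟩, e, hs⟩) (not_le.2 hq.2)
      have hcd : c < d := hcr.trans hrd
      obtain ⟨s, hs, -, hl⟩ := h.exc (hx.trans hc1.1) hcd.le (hd1.2.trans hy) hfree
      obtain ⟨m, hm⟩ := two_pi_of (h.cos_eq hθ hcd.le hs hl hc2.1 hd2.1) hc2.2
      have hθd := hl d ⟨hcd.le, le_rfl⟩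
      obtain ⟨N, hN1, hN⟩ := nat_of_int hs (sub_pos.2 hcd) (m := m) (by linarith)
      have hN1' : (1:ℝ) ≤ N := by exact_mod_cast hN1
      have hp := Real.pi_pos
      have hlen : 2 * Real.pi ≤ d - c := by rw [hN]; nlinarith
      push_cast at hlt
      have q1 := ih x c hx hc1.1 (hcd.le.trans (hd1.2.trans hy)) hZx hc2 (by linarith [hd1.2])
      have q3 := ih d y (hx.trans (hc1.1.trans hcd.le)) hd1.2 hy hd2 hZy (by linarith [hc1.1])
      have hm' : θ d = θ c + m * (2 * Real.pi) := by linarith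
      obtain ⟨i1, i2⟩ := arc_int hcd.le hs hl
      have q2 : QQ θ c d := by
        refine ⟨N, hN.ge, ⟨m, hm'⟩, ?_, ?_⟩
        · rw [i1, cos_per m hm', ← hN]; ring
        · rw [i2, sin_per m hm', ← hN]; ring
      exact (q1.trans hθ q2).trans hθ q3

lemma case_B {θ : ℝ → ℝ} {T : ℝ} {G : ℝ → ℝ} {ρ α : ℝ} (h : DX θ T G ρ α) (hθ : Continuous θ)
    (h0 : θ 0 = 0)
    (hz : ∀ r ∈ Set.Ioo 0 T, G r = 0 → Real.sin (θ r - α) = 0) (hex : ∃ r ∈ Set.Ioo 0 T, G r = 0) :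
    toA (EndPt θ T) ∈ ECSC T := by
  obtain ⟨r, hr, hGr⟩ := hex
  have hcl : IsClosed {q | G q = 0 ∧ Real.sin (θ q - α) = 0} :=
    (isClosed_eq h.cont continuous_const).inter
      (isClosed_eq (by fun_prop) continuous_const)
  have hne : (Set.Icc 0 T ∩ {q | G q = 0 ∧ Real.sin (θ q - α) = 0}).Nonempty :=
    ⟨r, ⟨hr.1.le, hr.2.le⟩, hGr, hz r hr hGr⟩
  have hcp := (isCompact_Icc (a := (0:ℝ)) (b := T)).inter_right hcl
  obtain ⟨a, ⟨ha1, ha2⟩, hamin⟩ := hcp.exists_isLeast hne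
  obtain ⟨b, ⟨hb1, hb2⟩, hbmax⟩ := hcp.exists_isGreatest hne
  have hab : a ≤ b := hamin ⟨hb1, hb2⟩
  have f1 : ∀ r ∈ Set.Ioo 0 a, G r ≠ 0 := fun q hq e => by
    have hq' : q ∈ Set.Ioo 0 T := ⟨hq.1, hq.2.trans_le ha1.2⟩
    exact absurd (hamin ⟨⟨hq'.1.le, hq'.2.le⟩, e, hz q hq' e⟩) (not_le.2 hq.2)
  have f3 : ∀ r ∈ Set.Ioo b T, G r ≠ 0 := fun q hq e => by
    have hq' : q ∈ Set.Ioo 0 T := ⟨hb1.1.trans_lt hq.1, hq.2⟩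
    exact absurd (hbmax ⟨⟨hq'.1.le, hq'.2.le⟩, e, hz q hq' e⟩) (not_le.2 hq.1)
  obtain ⟨s, hs, -, l1⟩ := h.exc le_rfl ha1.1 ha1.2 f1
  obtain ⟨σ, hσ, -, l3⟩ := h.exc hb1.1 hb1.2 le_rfl f3
  have hp := Real.pi_pos
  obtain ⟨n, hn⟩ := exists_nat_gt ((b - a) / (2 * Real.pi))
  rw [div_lt_iff₀ (by positivity)] at hn
  obtain ⟨k, hk, ⟨m, hm⟩, ic, is⟩ := QQ_all h hθ hz n a b ha1.1 hab hb1.2 ha2 hb2 hn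
  obtain ⟨i1, j1⟩ := arc_int ha1.1 hs l1
  obtain ⟨i3, j3⟩ := arc_int hb1.2 hσ l3
  have ta := l1 a ⟨ha1.1, le_rfl⟩
  rw [h0] at ta
  replace ta : θ a = s * a := by rw [ta]; ring
  have tT := l3 T ⟨hb1.2, le_rfl⟩
  have tT' : θ T = s * a + σ * (T - b) + m * (2 * Real.pi) := by rw [tT, hm, ta]; ring
  rw [endpt_split hθ a b T, i1, j1, ic, is, i3, j3, cos_per m hm, sin_per m hm, cos_per m tT',
    sin_per m tT', add_comm (Real.pi / 2) (θ a), Real.cos_add_pi_div_two, Real.sin_add_pi_div_two, ta, h0,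
    cos_sgn hs, sin_sgn hs]
  have hss : s * s = 1 := by rcases hs with rfl | rfl <;> norm_num
  have := mem_CSC (T := T) (s := s) (σ := σ) (l1 := a) (d := b - a - k * (2 * Real.pi)) (l3 := T - b) k
    hs hσ ha1.1 (by linarith) (by linarith [hb1.2]) (by ring)
  refine mem_of_eq3 ?_ ?_ ?_ this
  · rw [Real.cos_zero]; ring
  · rw [Real.sin_zero]; linear_combination Real.sin a * hss
  · exact ang_per m (by rw [tT']; ring)

/-- sign of derivative at the left end of an excursion. -/
lemma sign_right {G : ℝ → ℝ} {z w d s : ℝ} (hd : HasDerivAt G d z) (hz : G z = 0) (hzw : z < w)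
    (h : ∀ r ∈ Set.Ioo z w, 0 < s * G r) : 0 ≤ s * d := by
  have hsub : Set.Ioi z ⊆ {z}ᶜ := fun x hx => ne_of_gt hx
  have ht := (hasDerivAt_iff_tendsto_slope.1 hd).mono_left
    (nhdsWithin_mono z hsub)
  refine ge_of_tendsto (ht.const_mul s) ?_
  filter_upwards [Ioo_mem_nhdsGT hzw] with r hr
  rw [slope_def_field, hz, sub_zero, ← mul_div_assoc]
  exact div_nonneg (h r hr).le (by linarith [hr.1])

lemma sign_left {G : ℝ → ℝ} {z w d s : ℝ} (hd : HasDerivAt G d z) (hz : G z = 0) (hzw : w < z)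
    (h : ∀ r ∈ Set.Ioo w z, 0 < s * G r) : s * d ≤ 0 := by
  have hsub : Set.Iio z ⊆ {z}ᶜ := fun x hx => ne_of_lt hx
  have ht := (hasDerivAt_iff_tendsto_slope.1 hd).mono_left
    (nhdsWithin_mono z hsub)
  refine le_of_tendsto (ht.const_mul s) ?_
  filter_upwards [Ioo_mem_nhdsLT hzw] with r hr
  rw [slope_def_field, hz, sub_zero, ← mul_div_assoc]
  exact div_nonpos_of_nonneg_of_nonpos (h r hr).le (by linarith [hr.2])

lemma isol {G : ℝ → ℝ} {z d : ℝ} (hd : HasDerivAt G d z) (hd0 : d ≠ 0) :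
    ∃ ε > 0, ∀ r, |r - z| < ε → r ≠ z → G r ≠ G z := by
  have := hd.eventually_ne hd0 (c := G z)
  rw [eventually_nhdsWithin_iff, Metric.eventually_nhds_iff] at this
  obtain ⟨ε, hε, h⟩ := this
  exact ⟨ε, hε, fun r hr hne => h (by rwa [Real.dist_eq]) hne⟩

lemma sin_ne_of_cos {x y : ℝ} (h : Real.cos x = Real.cos y) (hx : Real.sin x ≠ 0) : Real.sin y ≠ 0 := by
  intro e
  have h1 := Real.sin_sq_add_cos_sq x
  have h2 := Real.sin_sq_add_cos_sq y
  rw [e, ← h] at h2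
  apply hx
  have : Real.sin x ^ 2 = 0 := by linarith
  exact pow_eq_zero_iff (two_ne_zero) |>.1 this

lemma next_zero {θ : ℝ → ℝ} {T : ℝ} {G : ℝ → ℝ} {ρ α : ℝ} (h : DX θ T G ρ α) (hθ : Continuous θ)
    {z w : ℝ} (hz0 : 0 ≤ z) (hzw : z < w) (hw : w ≤ T) (hz : G z = 0) (hGw : G w = 0)
    (hs : Real.sin (θ z - α) ≠ 0) :
    ∃ z', z < z' ∧ z' ≤ w ∧ G z' = 0 ∧ (∀ r ∈ Set.Ioo z z', G r ≠ 0) ∧ Real.sin (θ z' - α) ≠ 0 := by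
  obtain ⟨ε, hε, hi⟩ := isol (h.2.1 z) (mul_ne_zero (h.pos hz).ne' hs)
  rw [hz] at hi
  have hwε : z + ε ≤ w := by
    by_contra hc
    exact hi w (by rw [abs_lt]; constructor <;> linarith) hzw.ne' hGw
  obtain ⟨z', ⟨h1, h2⟩, hmin⟩ := ((isCompact_Icc (a := z + ε) (b := w)).inter_right
    (isClosed_eq h.cont continuous_const : IsClosed {r | G r = 0})).exists_isLeast
    ⟨w, ⟨hwε, le_rfl⟩, hGw⟩
  have hzz : z < z' := by linarith [h1.1]
  have hf : ∀ r ∈ Set.Ioo z z', G r ≠ 0 := by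
    intro r hr e
    rcases lt_or_ge r (z + ε) with hlt | hge
    · exact hi r (by rw [abs_lt]; constructor <;> linarith [hr.1]) hr.1.ne' e
    · exact absurd (hmin ⟨⟨hge, hr.2.le.trans h1.2⟩, e⟩) (not_le.2 hr.2)
  obtain ⟨s, es, -, hl⟩ := h.exc hz0 hzz.le (h1.2.trans hw) hf
  exact ⟨z', hzz, h1.2, h2, hf, sin_ne_of_cos (h.cos_eq hθ hzz.le es hl hz h2) hs⟩

lemma prev_zero {θ : ℝ → ℝ} {T : ℝ} {G : ℝ → ℝ} {ρ α : ℝ} (h : DX θ T G ρ α) (hθ : Continuous θ)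
    {z w : ℝ} (hw0 : 0 ≤ w) (hzw : w < z) (hzT : z ≤ T) (hz : G z = 0) (hGw : G w = 0)
    (hs : Real.sin (θ z - α) ≠ 0) :
    ∃ z', w ≤ z' ∧ z' < z ∧ G z' = 0 ∧ (∀ r ∈ Set.Ioo z' z, G r ≠ 0) ∧ Real.sin (θ z' - α) ≠ 0 := by
  obtain ⟨ε, hε, hi⟩ := isol (h.2.1 z) (mul_ne_zero (h.pos hz).ne' hs)
  rw [hz] at hi
  have hwε : w ≤ z - ε := by
    by_contra hc
    exact hi w (by rw [abs_lt]; constructor <;> linarith) hzw.ne hGw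
  obtain ⟨z', ⟨h1, h2⟩, hmax⟩ := ((isCompact_Icc (a := w) (b := z - ε)).inter_right
    (isClosed_eq h.cont continuous_const : IsClosed {r | G r = 0})).exists_isGreatest
    ⟨w, ⟨le_rfl, hwε⟩, hGw⟩
  have hzz : z' < z := by linarith [h1.2]
  have hf : ∀ r ∈ Set.Ioo z' z, G r ≠ 0 := by
    intro r hr e
    rcases lt_or_ge (z - ε) r with hlt | hge
    · exact hi r (by rw [abs_lt]; constructor <;> linarith [hr.2]) hr.2.ne e
    · exact absurd (hmax ⟨⟨h1.1.trans hr.1.le, hge⟩, e⟩) (not_le.2 hr.1)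
  obtain ⟨s, es, -, hl⟩ := h.exc (hw0.trans h1.1) hzz.le hzT hf
  exact ⟨z', h1.1, hzz, h2, hf, sin_ne_of_cos (h.cos_eq hθ hzz.le es hl h2 hz).symm hs⟩

lemma small_int {m : ℤ} (h1 : (m:ℝ) * (2 * Real.pi) < 2 * Real.pi)
    (h2 : -(2 * Real.pi) < (m:ℝ) * (2 * Real.pi)) : m = 0 := by
  have hp := Real.pi_pos
  have a1 : (m:ℝ) < 1 := by by_contra hc; nlinarith
  have a2 : (-1:ℝ) < m := by by_contra hc; nlinarith
  have b1 : m < 1 := by exact_mod_cast a1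
  have b2 : -1 < m := by exact_mod_cast a2
  lia

/-- same cosine along a short slope. -/
lemma cos_short {ψ s l : ℝ} (hs : s = 1 ∨ s = -1) (hl : 0 < l) (hl2 : l < 2 * Real.pi)
    (h : Real.cos ψ = Real.cos (ψ + s * l)) : ∃ m : ℤ, 2 * ψ + s * l = m * (2 * Real.pi) := by
  obtain ⟨k, hk | hk⟩ := Real.cos_eq_cos_iff.1 h
  · exfalso
    obtain ⟨N, hN, hN2⟩ := nat_of_int hs hl (m := k) (by linarith)
    have : (1:ℝ) ≤ N := by exact_mod_cast hN
    have hp := Real.pi_pos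
    nlinarith
  · exact ⟨k, by linarith⟩

lemma exc_len {θ : ℝ → ℝ} {T : ℝ} {G : ℝ → ℝ} {ρ α : ℝ} (h : DX θ T G ρ α) (hθ : Continuous θ)
    {z w s : ℝ} (hzw : z < w) (hz : G z = 0) (hw : G w = 0) (hf : ∀ r ∈ Set.Ioo z w, G r ≠ 0)
    (hs : Real.sin (θ z - α) ≠ 0) (es : s = 1 ∨ s = -1) (hl : Lin θ z w s) :
    w - z < 2 * Real.pi ∧ ∃ m : ℤ, 2 * (θ z - α) + s * (w - z) = m * (2 * Real.pi) := by
  have hss : s * s = 1 := by rcases es with rfl | rfl <;> norm_num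
  have hp := Real.pi_pos
  have hlen : w - z < 2 * Real.pi := by
    by_contra hc
    push Not at hc
    set u := -2 * s * (θ z - α) with hu
    set n := ⌊u / (2 * Real.pi)⌋ with hn
    have h1 := Int.floor_le (u / (2 * Real.pi))
    have h2 := Int.lt_floor_add_one (u / (2 * Real.pi))
    rw [le_div_iff₀ (by positivity), ← hn] at h1
    rw [div_lt_iff₀ (by positivity), ← hn] at h2
    have hne : u - n * (2 * Real.pi) ≠ 0 := by
      intro e
      apply hs
      rw [Real.sin_eq_zero_iff]
      have : θ z - α = -s * n * Real.pi := by linear_combination (-1 / 2 * s) * e + (-(θ z - α)) * hss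
      rcases es with e1 | e1
      · exact ⟨-n, by rw [this, e1]; push_cast; ring⟩
      · exact ⟨n, by rw [this, e1]; ring⟩
    have hpos : 0 < u - n * (2 * Real.pi) := lt_of_le_of_ne (by linarith) (Ne.symm hne)
    set r := z + (u - n * (2 * Real.pi)) with hr
    have hrw : r ∈ Set.Ioo z w := ⟨by linarith, by linarith⟩
    have hlr : Lin θ z r s := fun q hq => hl q ⟨hq.1, hq.2.trans hrw.2.le⟩
    have hen := h.energy hθ hrw.1.le es hlr
    have hθr := hlr r ⟨hrw.1.le, le_rfl⟩
    have hcos : Real.cos (θ r - α) = Real.cos (θ z - α) := by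
      rw [← Real.cos_neg (θ z - α)]
      have e : θ r - α = -(θ z - α) + (-s * n) * (2 * Real.pi) := by
        rw [hθr, hr, hu]; linear_combination (-2 * (θ z - α)) * hss
      rcases es with e1 | e1
      · exact cos_per (-n) (by rw [e, e1]; push_cast; ring)
      · exact cos_per n (by rw [e, e1]; ring)
    rw [hcos, hz] at hen
    exact hf r hrw (by linarith)
  refine ⟨hlen, cos_short es (by linarith) hlen ?_⟩
  have := h.cos_eq hθ hzw.le es hl hz hw
  rw [hl w ⟨hzw.le, le_rfl⟩] at this
  rw [this]; congr 1; ring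

/-- corner of the heading forces a zero. -/
lemma corner {θ : ℝ → ℝ} {T : ℝ} {G : ℝ → ℝ} {ρ α : ℝ} (h : DX θ T G ρ α)
    {a t b σ : ℝ} (ha : 0 ≤ a) (hat : a < t) (htb : t < b) (hb : b ≤ T)
    (h1 : ∀ r ∈ Set.Icc a t, θ r = θ t + σ * (r - t)) (h2 : ∀ r ∈ Set.Icc t b, θ r = θ t - σ * (r - t)) :
    G t = 0 := by
  by_contra hne
  have hex : ∃ τ : ℝ, (τ = 1 ∨ τ = -1) ∧ 0 < τ * G t := by
    rcases lt_or_gt_of_ne hne with hlt | hlt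
    · exact ⟨-1, Or.inr rfl, by linarith⟩
    · exact ⟨1, Or.inl rfl, by linarith⟩
  obtain ⟨τ, hτ, hpos⟩ := hex
  have hcont : ContinuousAt (fun r => τ * G r) t := (continuous_const.mul h.cont).continuousAt
  have hev := hcont.eventually (lt_mem_nhds hpos)
  rw [Metric.eventually_nhds_iff] at hev
  obtain ⟨ε, hε, hev⟩ := hev
  obtain ⟨η, hη0, hη⟩ : ∃ η > 0, η ≤ ε ∧ η ≤ t - a ∧ η ≤ b - t :=
    ⟨min ε (min (t - a) (b - t)), lt_min hε (lt_min (by linarith) (by linarith)),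
      min_le_left _ _, (min_le_right _ _).trans (min_le_left _ _),
      (min_le_right _ _).trans (min_le_right _ _)⟩
  have hslope := h.2.2.2 (t - η) (t + η) τ hτ (by linarith) (by linarith) (by linarith)
    (fun r hr => hev (by rw [Real.dist_eq, abs_lt]; constructor <;> linarith [hr.1, hr.2]))
  rw [h1 (t - η) ⟨by linarith, by linarith⟩, h2 (t + η) ⟨by linarith, by linarith⟩] at hslope
  rcases hτ with rfl | rfl <;> linarith

open Classical in
/-- reversal of a piece. -/
noncomputable def rev (θ : ℝ → ℝ) (p q : ℝ) : ℝ → ℝ := fun r =>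
  if r ∈ Set.Icc p q then θ (p + q - r) else θ r

lemma rev_in {θ : ℝ → ℝ} {p q r : ℝ} (h : r ∈ Set.Icc p q) : rev θ p q r = θ (p + q - r) := if_pos h
lemma rev_le {θ : ℝ → ℝ} {p q r : ℝ} (hpq : p ≤ q) (he : θ p = θ q) (h : r ≤ p) : rev θ p q r = θ r := by
  rcases h.eq_or_lt with rfl | h
  · rw [rev_in ⟨le_rfl, hpq⟩, he]; congr 1; ring
  · exact if_neg fun hc => absurd hc.1 (not_le.2 h)
lemma rev_ge {θ : ℝ → ℝ} {p q r : ℝ} (hpq : p ≤ q) (he : θ p = θ q) (h : q ≤ r) : rev θ p q r = θ r := by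
  rcases h.eq_or_lt with rfl | h
  · rw [rev_in ⟨hpq, le_rfl⟩, ← he]; congr 1; ring
  · exact if_neg fun hc => absurd hc.2 (not_le.2 h)

lemma rev_lip {θ : ℝ → ℝ} (hθ : LipschitzWith 1 θ) {p q : ℝ} (hpq : p ≤ q) (he : θ p = θ q) :
    LipschitzWith 1 (rev θ p q) := by
  apply lip_of_abs
  have key : ∀ x y, x ≤ y → |rev θ p q x - rev θ p q y| ≤ y - x := by
    intro x y hxy
    have A := fun u v => abs_le.1 (abs_of_lip hθ u v)
    have L : ∀ u v, u ≤ v → -(v - u) ≤ θ u - θ v ∧ θ u - θ v ≤ v - u := fun u v huv => by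
      have := A u v
      rwa [abs_sub_comm, abs_of_nonneg (sub_nonneg.2 huv)] at this
    rw [abs_le]
    rcases le_total x p with hxp | hxp
    · rw [rev_le hpq he hxp]
      rcases le_total y p with hyp | hyp
      · rw [rev_le hpq he hyp]; exact L x y hxy
      rcases le_total y q with hyq | hyq
      · rw [rev_in ⟨hyp, hyq⟩]
        have a := L x p hxp
        have b := L (p + q - y) q (by linarith)
        constructor <;> linarith
      · rw [rev_ge hpq he hyq]; exact L x y hxy
    rcases le_total x q with hxq | hxq
    · rw [rev_in ⟨hxp, hxq⟩]
      rcases le_total y q with hyq | hyq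
      · rw [rev_in ⟨hxp.trans hxy, hyq⟩]
        have b := L (p + q - y) (p + q - x) (by linarith)
        constructor <;> linarith
      · rw [rev_ge hpq he hyq]
        have a := L q y hyq
        have b := L p (p + q - x) (by linarith)
        constructor <;> linarith
    · rw [rev_ge hpq he hxq, rev_ge hpq he (hxq.trans hxy)]; exact L x y hxy
  intro x y
  rcases le_total x y with hxy | hxy
  · rw [abs_sub_comm x y, abs_of_nonneg (sub_nonneg.2 hxy)]; exact key x y hxy
  · rw [abs_sub_comm, abs_of_nonneg (sub_nonneg.2 hxy)]; exact key y x hxy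

lemma rev_end {θ : ℝ → ℝ} (hθ : LipschitzWith 1 θ) {p q T : ℝ} (hp : 0 ≤ p) (hpq : p ≤ q) (hq : q ≤ T)
    (he : θ p = θ q) : EndPt (rev θ p q) T = EndPt θ T := by
  have hc := (rev_lip hθ hpq he).continuous
  have key : ∀ f : ℝ → ℝ, (∫ r in (0:ℝ)..p, f (rev θ p q r)) = (∫ r in (0:ℝ)..p, f (θ r)) ∧
      (∫ r in p..q, f (rev θ p q r)) = (∫ r in p..q, f (θ r)) ∧
      (∫ r in q..T, f (rev θ p q r)) = (∫ r in q..T, f (θ r)) := by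
    intro f
    refine ⟨?_, ?_, ?_⟩
    · refine intervalIntegral.integral_congr fun r hr => ?_
      rw [Set.uIcc_of_le hp] at hr
      simp only [rev_le hpq he hr.2]
    · rw [intervalIntegral.integral_congr (g := fun r => f (θ (p + q - r)))]
      · rw [intervalIntegral.integral_comp_sub_left (fun x => f (θ x)) (p + q)]
        congr 1 <;> ring
      · intro r hr
        rw [Set.uIcc_of_le hpq] at hr
        simp only [rev_in hr]
    · refine intervalIntegral.integral_congr fun r hr => ?_
      rw [Set.uIcc_of_le hq] at hr
      simp only [rev_ge hpq he hr.1]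
  rw [endpt_split hc p q T, endpt_split hθ.continuous p q T, rev_ge hpq he hq]
  obtain ⟨a1, a2, a3⟩ := key fun x => Real.cos (Real.pi / 2 + x)
  obtain ⟨b1, b2, b3⟩ := key fun x => Real.sin (Real.pi / 2 + x)
  rw [a1, a2, a3, b1, b2, b3]

lemma swap_false {θ : ℝ → ℝ} (hθ : LipschitzWith 1 θ) (h0 : θ 0 = 0) {T : ℝ}
    (hall : ∀ η : ℝ → ℝ, LipschitzWith 1 η → η 0 = 0 → EndPt η T = EndPt θ T → DExt η T)
    {z l δ s : ℝ} (es : s = 1 ∨ s = -1) (hδ : 0 < δ) (hδl : δ < l) (hl : l < 2 * Real.pi)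
    (hz : 0 ≤ z - δ) (hT : z + 2 * l ≤ T)
    (L1 : ∀ r ∈ Set.Icc (z - δ) z, θ r = θ z - s * (r - z))
    (L2 : ∀ r ∈ Set.Icc z (z + l), θ r = θ z + s * (r - z))
    (L3 : ∀ r ∈ Set.Icc (z + l) (z + 2 * l), θ r = θ z + s * l - s * (r - (z + l))) : False := by
  set p := z - δ with hp
  set q := z + 2 * l - δ with hq
  have hpq : p ≤ q := by linarith
  have he : θ p = θ q := by
    rw [L1 p ⟨le_rfl, by linarith⟩, L3 q ⟨by linarith, by linarith⟩, hp, hq]; ring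
  have hη := rev_lip hθ hpq he
  obtain ⟨G, ρ, α, hD⟩ := hall (rev θ p q) hη (by rw [rev_le hpq he hz, h0])
    (rev_end hθ hz hpq (by linarith) he)
  change DX (rev θ p q) T G ρ α at hD
  set η := rev θ p q with hηd
  set t1 := p + q - (z + l) with ht1
  set t2 := p + q - z with ht2
  have M1 : ∀ r ∈ Set.Icc p t1, η r = θ z + s * l + s * (r - t1) := fun r hr => by
    rw [hηd, rev_in ⟨hr.1, by linarith [hr.2]⟩, L3 _ ⟨by linarith [hr.2], by linarith [hr.1]⟩]; ring
  have M2 : ∀ r ∈ Set.Icc t1 t2, η r = θ z + s * l - s * (r - t1) := fun r hr => by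
    rw [hηd, rev_in ⟨by linarith [hr.1], by linarith [hr.2]⟩,
      L2 _ ⟨by linarith [hr.2], by linarith [hr.1]⟩]; ring
  have M3 : ∀ r ∈ Set.Icc t2 q, η r = θ z + s * (r - t2) := fun r hr => by
    rw [hηd, rev_in ⟨by linarith [hr.1], hr.2⟩,
      L1 _ ⟨by linarith [hr.2], by linarith [hr.1]⟩]; ring
  have M4 : ∀ r ∈ Set.Icc q (z + 2 * l), η r = θ z + s * δ - s * (r - q) := fun r hr => by
    rw [hηd, rev_ge hpq he hr.1, L3 _ ⟨by linarith [hr.1], hr.2⟩]; ring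
  have v1 : η t1 = θ z + s * l := by rw [M1 t1 ⟨by linarith, le_rfl⟩]; ring
  have v2 : η t2 = θ z := by rw [M3 t2 ⟨le_rfl, by linarith⟩]; ring
  have v3 : η q = θ z + s * δ := by rw [M4 q ⟨le_rfl, by linarith⟩]; ring
  have G1 : G t1 = 0 := corner hD (a := p) (b := t2) (σ := s) hz (by linarith) (by linarith)
    (by linarith) (by rw [v1]; exact M1) (by rw [v1]; exact M2)
  have G2 : G t2 = 0 := corner hD (a := t1) (b := q) (σ := -s) (by linarith) (by linarith) (by linarith)
    (by linarith) (fun r hr => by rw [v2, M2 r hr]; ring) (fun r hr => by rw [v2, M3 r hr]; ring)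
  have G3 : G q = 0 := corner hD (a := t2) (b := z + 2 * l) (σ := s) (by linarith) (by linarith)
    (by linarith) hT (fun r hr => by rw [v3, M3 r hr]; ring) (by rw [v3]; exact M4)
  have es' : -s = 1 ∨ -s = -1 := by rcases es with rfl | rfl <;> norm_num
  have c1 := hD.cos_eq hη.continuous (x := t1) (y := t2) (by linarith) es'
    (fun r hr => by rw [v1, M2 r hr]; ring) G1 G2
  have c2 := hD.cos_eq hη.continuous (x := t2) (y := q) (by linarith) es
    (fun r hr => by rw [v2, M3 r hr]) G2 G3
  rw [v1, v2] at c1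
  rw [v2, v3] at c2
  obtain ⟨m, hm⟩ := cos_short (ψ := θ z - α) (l := l) es (by linarith) hl
    (by rw [← c1]; congr 1; ring)
  obtain ⟨m', hm'⟩ := cos_short (ψ := θ z - α) (l := δ) es hδ (by linarith)
    (by rw [c2]; congr 1; ring)
  obtain ⟨N, hN, hN2⟩ := nat_of_int es (sub_pos.2 hδl) (m := m - m') (by push_cast; linarith)
  have : (1:ℝ) ≤ N := by exact_mod_cast hN
  have hp := Real.pi_pos
  nlinarith

lemma triple_false {θ : ℝ → ℝ} (hθ : LipschitzWith 1 θ) (h0 : θ 0 = 0) {T : ℝ}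
    (hall : ∀ η : ℝ → ℝ, LipschitzWith 1 η → η 0 = 0 → EndPt η T = EndPt θ T → DExt η T)
    {G : ℝ → ℝ} {ρ α : ℝ} (h : DX θ T G ρ α) {z1 z2 z3 : ℝ} (h01 : 0 < z1) (h12 : z1 < z2)
    (h23 : z2 < z3) (h3T : z3 ≤ T) (g1 : G z1 = 0) (g2 : G z2 = 0) (g3 : G z3 = 0)
    (f1 : ∀ r ∈ Set.Ioo z1 z2, G r ≠ 0) (f2 : ∀ r ∈ Set.Ioo z2 z3, G r ≠ 0)
    (n1 : Real.sin (θ z1 - α) ≠ 0) (n2 : Real.sin (θ z2 - α) ≠ 0) : False := by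
  have hc := hθ.continuous
  have hρ := h.pos g1
  have d1 := mul_ne_zero hρ.ne' n1
  have d2 := mul_ne_zero hρ.ne' n2
  obtain ⟨s, es, ps, ls⟩ := h.exc h01.le h12.le (h23.le.trans h3T) f1
  obtain ⟨s2, es2, ps2, ls2⟩ := h.exc (h01.le.trans h12.le) h23.le h3T f2
  have opp : ∀ {u v d : ℝ}, (u = 1 ∨ u = -1) → (v = 1 ∨ v = -1) → d ≠ 0 → 0 ≤ u * d → v * d ≤ 0 →
      v = -u := by
    intro u v d hu hv hd a b
    rcases hu with rfl | rfl <;> rcases hv with rfl | rfl <;> norm_num <;>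
      exact absurd (by linarith) hd
  have e2 : s = -s2 := opp es2 es d2 (sign_right (h.2.1 z2) g2 h23 ps2) (sign_left (h.2.1 z2) g2 h12 ps)
  obtain ⟨len1, m, hm⟩ := exc_len h hc h12 g1 g2 f1 n1 es ls
  obtain ⟨len2, m', hm'⟩ := exc_len h hc h23 g2 g3 f2 n2 es2 ls2
  have t2 := ls z2 ⟨h12.le, le_rfl⟩
  have e2' : s2 = -s := by linarith
  rw [t2, e2'] at hm'
  have hdiff : s * ((z2 - z1) - (z3 - z2)) = ((m' - m : ℤ) : ℝ) * (2 * Real.pi) := by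
    push_cast; linarith
  have hmm : m' - m = 0 := by
    apply small_int
    · rw [← hdiff]; rcases es with rfl | rfl <;> linarith
    · rw [← hdiff]; rcases es with rfl | rfl <;> linarith
  rw [hmm] at hdiff
  have hl : z3 - z2 = z2 - z1 := by
    rcases es with rfl | rfl <;> norm_num at hdiff <;> linarith
  obtain ⟨ε, hε, hi⟩ := isol (h.2.1 z1) d1
  rw [g1] at hi
  obtain ⟨δ, hδ0, hδ1, hδ2, hδ3⟩ : ∃ δ > 0, δ ≤ ε ∧ δ ≤ z1 ∧ δ < z2 - z1 :=
    ⟨min ε (min z1 ((z2 - z1) / 2)), lt_min hε (lt_min h01 (by linarith)),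
      min_le_left _ _, (min_le_right _ _).trans (min_le_left _ _),
      ((min_le_right _ _).trans (min_le_right _ _)).trans_lt (by linarith)⟩
  obtain ⟨s0, es0, ps0, ls0⟩ := h.exc (x := z1 - δ) (y := z1) (by linarith) (by linarith) (by linarith)
    (fun r hr => hi r (by rw [abs_lt]; constructor <;> linarith [hr.1, hr.2]) hr.2.ne)
  have e0 : s0 = -s := opp es es0 d1 (sign_right (h.2.1 z1) g1 h12 ps)
    (sign_left (h.2.1 z1) g1 (by linarith) ps0)
  have tz := ls0 z1 ⟨by linarith, le_rfl⟩
  refine swap_false hθ h0 hall (z := z1) (l := z2 - z1) (δ := δ) (s := s) es hδ0 hδ3 len1 (by linarith)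
    (by linarith) ?_ ?_ ?_
  · intro r hr
    rw [tz, ls0 r hr, e0]; ring
  · intro r hr
    exact ls r ⟨hr.1, by linarith [hr.2]⟩
  · intro r hr
    rw [ls2 r ⟨by linarith [hr.1], by linarith [hr.2]⟩, t2, e2']; ring

lemma transversal_false {θ : ℝ → ℝ} (hθ : LipschitzWith 1 θ) (h0 : θ 0 = 0) {T : ℝ}
    (hall : ∀ η : ℝ → ℝ, LipschitzWith 1 η → η 0 = 0 → EndPt η T = EndPt θ T → DExt η T)
    {G : ℝ → ℝ} {ρ α : ℝ} (h : DX θ T G ρ α) {a b c z : ℝ} (ha : 0 < a) (hab : a < b) (hbc : b < c)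
    (hcT : c < T) (ga : G a = 0) (gb : G b = 0) (gc : G c = 0) (hz : z ∈ Set.Ioo 0 T) (gz : G z = 0)
    (nz : Real.sin (θ z - α) ≠ 0) : False := by
  have hc := hθ.continuous
  rcases le_or_gt z a with hza | haz
  · obtain ⟨y, hy1, hy2, hy3, hy4, hy5⟩ := next_zero h hc hz.1.le (hza.trans_lt hab) (by linarith) gz gb nz
    obtain ⟨x, hx1, hx2, hx3, hx4, hx5⟩ := next_zero h hc (hz.1.le.trans hy1.le) (hy2.trans_lt hbc)
      hcT.le hy3 gc hy5
    exact triple_false hθ h0 hall h hz.1 hy1 hx1 (hx2.trans hcT.le) gz hy3 hx3 hy4 hx4 nz hy5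
  rcases le_or_gt c z with hcz | hzc
  · obtain ⟨y, hy1, hy2, hy3, hy4, hy5⟩ := prev_zero h hc (ha.le.trans hab.le) (hbc.trans_le hcz) hz.2.le
      gz gb nz
    obtain ⟨x, hx1, hx2, hx3, hx4, hx5⟩ := prev_zero h hc ha.le (hab.trans_le hy1)
      (hy2.le.trans hz.2.le) hy3 ga hy5
    exact triple_false hθ h0 hall h (ha.trans_le hx1) hx2 hy2 hz.2.le hx3 hy3 gz hx4 hy4 hx5 hy5
  · obtain ⟨y, hy1, hy2, hy3, hy4, hy5⟩ := prev_zero h hc ha.le haz hz.2.le gz ga nz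
    obtain ⟨x, hx1, hx2, hx3, hx4, hx5⟩ := next_zero h hc hz.1.le hzc hcT.le gz gc nz
    exact triple_false hθ h0 hall h (ha.trans_le hy1) hy2 hx1 (hx2.trans hcT.le) hy3 gz hx3 hy4 hx4 hy5 nz

theorem main_aux (E : ℝ → ℝ × ℝ × Real.Angle)
    (hE : ContinuousOn E (Set.Ici 0)) (T : ℝ) (hT : 0 ≤ T)
    (hmiss : ∀ t ∈ Set.Ico 0 T, E t ∉ DubinsReach t)
    (hhit : E T ∈ DubinsReach T) :
    E T ∈ ECSC T ∪ ECCC T := by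
  obtain ⟨θ, hθ, h0, hEnd⟩ := lip_of_reach hhit
  rcases hT.eq_or_lt with rfl | hTp
  · left
    rw [hEnd]
    refine ⟨1, 1, 0, 0, Or.inl rfl, Or.inl rfl, ⟨le_rfl, by positivity⟩, ⟨le_rfl, le_rfl⟩, ?_⟩
    simp [toA, EndPt, PCSC, h0]
  have hall : ∀ η : ℝ → ℝ, LipschitzWith 1 η → η 0 = 0 → EndPt η T = EndPt θ T → DExt η T :=
    fun η h1 h2 h3 => all_ext E hE T hTp hmiss η h1 h2 (by rw [h3, hEnd])
  obtain ⟨G, ρ, α, h⟩ := hall θ hθ h0 rfl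
  change DX θ T G ρ α at h
  rw [hEnd]
  by_cases h3 : ∃ a b c, 0 < a ∧ a < b ∧ b < c ∧ c < T ∧ G a = 0 ∧ G b = 0 ∧ G c = 0
  · obtain ⟨a, b, c, ha, hab, hbc, hcT, ga, gb, gc⟩ := h3
    left
    refine case_B h hθ.continuous h0 (fun r hr gr => ?_) ⟨a, ⟨ha, by linarith⟩, ga⟩
    by_contra hn
    exact transversal_false hθ h0 hall h ha hab hbc hcT ga gb gc hr gr hn
  · exact few_zeros h hθ.continuous h0 hT h3

end DubinsAux

/-- If the minimum-time lateral interception of a continuously moving target occurs at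
the finite time `T`, then the optimal interception point is an endpoint of a CSC- or
CCC-trajectory. -/
theorem optimal_interception_point (E : ℝ → ℝ × ℝ × Real.Angle)
    (hE : ContinuousOn E (Set.Ici 0)) (T : ℝ) (hT : 0 ≤ T)
    (hmiss : ∀ t ∈ Set.Ico 0 T, E t ∉ DubinsReach t)
    (hhit : E T ∈ DubinsReach T) :
    E T ∈ ECSC T ∪ ECCC T :=
  main_aux E hE T hT hmiss hhit
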